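/- Suppose the semicascade (Ω,φ) is tame and for every ω ∈ Ω the orbit closure of ω contains exactly one minimal set. Then every ergodic sequence (T_k) of operators from the convex hull of {V^n : n ≥ 0} converges in the weak* operator topology, and the support of every φ-ergodic Borel probability measure is a minimal set. -/

import Mathlib

open MeasureTheory Filter Topology

/-- The pairing `⟨f, μ⟩ = ∫ f dμ` of a function with a finite signed Borel measure,
defined via the Jordan decomposition of the signed measure. -/
noncomputable def spair {Ω : Type*} [MeasurableSpace Ω] (f : Ω → ℝ) (μ : SignedMeasure Ω) : ℝ :=
  (∫ ω, f ω ∂μ.toJordanDecomposition.posPart) - (∫ ω, f ω ∂μ.toJordanDecomposition.negPart)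

/-- The weak* topology on the space `X*` of finite signed Borel measures, i.e. the topology
of convergence of the pairings with all continuous functions `x ∈ C(Ω, ℝ)`. With this topology
on the codomain, the product topology on `SignedMeasure Ω → SignedMeasure Ω` is precisely the
weak* operator topology (pointwise convergence with `X*` in its weak* topology). -/
noncomputable instance weakStarTopology {Ω : Type*} [TopologicalSpace Ω] [MeasurableSpace Ω] :
    TopologicalSpace (SignedMeasure Ω) :=
  TopologicalSpace.induced (fun μ => fun x : C(Ω, ℝ) => spair (⇑x) μ) inferInstance

/-- The operator `V : X* → X*`, pushforward by `φ`: `(Vμ)(e) = μ(φ⁻¹ e)`. -/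
noncomputable def Vop {Ω : Type*} [MeasurableSpace Ω] (φ : Ω → Ω) :
    SignedMeasure Ω → SignedMeasure Ω :=
  fun μ => μ.map φ

/-- The Dirac measure at `ω`, as a signed measure. -/
noncomputable def diracSM {Ω : Type*} [MeasurableSpace Ω] (ω : Ω) : SignedMeasure Ω :=
  (Measure.dirac ω).toSignedMeasure

/-- `Γ(Ω,φ)`: the closure of `{Vⁿ : n ≥ 0}` in the weak* operator topology. -/
def GammaSG {Ω : Type*} [TopologicalSpace Ω] [MeasurableSpace Ω] (φ : Ω → Ω) :
    Set (SignedMeasure Ω → SignedMeasure Ω) :=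
  closure (Set.range fun n : ℕ => (Vop φ)^[n])

/-- `G(Ω,φ)`: the closure of the convex hull of `{Vⁿ : n ≥ 0}` in the weak* operator topology. -/
def GSG {Ω : Type*} [TopologicalSpace Ω] [MeasurableSpace Ω] (φ : Ω → Ω) :
    Set (SignedMeasure Ω → SignedMeasure Ω) :=
  closure (convexHull ℝ (Set.range fun n : ℕ => (Vop φ)^[n]))

/-- The kernel `L = {Q ∈ G(Ω,φ) : V ∘ Q = Q}` of the semigroup `G(Ω,φ)`. -/
def Lker {Ω : Type*} [TopologicalSpace Ω] [MeasurableSpace Ω] (φ : Ω → Ω) :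
    Set (SignedMeasure Ω → SignedMeasure Ω) :=
  {Q ∈ GSG φ | Vop φ ∘ Q = Q}

/-- The Ellis enveloping semigroup `E(Ω,φ)`: the closure of the iterates `{φⁿ : n ≥ 0}`
in the product topology (pointwise convergence) on `Ω → Ω`. -/
def EllisE {Ω : Type*} [TopologicalSpace Ω] (φ : Ω → Ω) : Set (Ω → Ω) :=
  closure (Set.range fun n : ℕ => φ^[n])

/-- `E_b(Ω,φ)`: the smallest set of self-maps of `Ω` containing the iterates `{φⁿ : n ≥ 0}`
and sequentially closed under pointwise convergence. -/
inductive Eb {Ω : Type*} [TopologicalSpace Ω] (φ : Ω → Ω) : (Ω → Ω) → Prop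
  | iterate (n : ℕ) : Eb φ φ^[n]
  | lim (p : ℕ → Ω → Ω) (q : Ω → Ω) (hp : ∀ k, Eb φ (p k))
      (hq : ∀ ω, Tendsto (fun k => p k ω) atTop (𝓝 (q ω))) : Eb φ q

/-- `E₁(Ω,φ)`: the set of pointwise limits of sequences of iterates `φ^{n_k}`. -/
def E1SG {Ω : Type*} [TopologicalSpace Ω] (φ : Ω → Ω) : Set (Ω → Ω) :=
  {p | ∃ n : ℕ → ℕ, ∀ ω, Tendsto (fun k => φ^[n k] ω) atTop (𝓝 (p ω))}

/-- An operator `P ∈ Γ(Ω,φ)` with `p = πP` is regular if `p` is Borel measurable and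
`(Pμ)(e) = μ(p⁻¹ e)` for every Borel probability measure `μ` and Borel set `e`. -/
def RegularOperator {Ω : Type*} [TopologicalSpace Ω] [MeasurableSpace Ω]
    (P : SignedMeasure Ω → SignedMeasure Ω) (p : Ω → Ω) : Prop :=
  Measurable p ∧ ∀ (μ : Measure Ω) [IsProbabilityMeasure μ],
    ∀ e : Set Ω, MeasurableSet e → P μ.toSignedMeasure e = (μ (p ⁻¹' e)).toReal

/-- A minimal set of the semicascade `(Ω,φ)`: a nonempty closed `φ`-invariant set containing
no proper nonempty closed `φ`-invariant subset. -/
def IsMinimalSet {Ω : Type*} [TopologicalSpace Ω] (φ : Ω → Ω) (m : Set Ω) : Prop :=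
  m.Nonempty ∧ IsClosed m ∧ Set.MapsTo φ m m ∧
    ∀ m' ⊆ m, m'.Nonempty → IsClosed m' → Set.MapsTo φ m' m' → m' = m

/-- The orbit closure of a point `ω`: the closure of the trajectory `{φⁿ ω : n ≥ 0}`. -/
def orbitClosure {Ω : Type*} [TopologicalSpace Ω] (φ : Ω → Ω) (ω : Ω) : Set Ω :=
  closure (Set.range fun n : ℕ => φ^[n] ω)

/-- A `φ`-ergodic measure: a `φ`-invariant Borel probability measure `μ` such that
`μ(e) ∈ {0,1}` for every Borel set `e` with `φ⁻¹ e = e`. -/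
def IsErgodicMeasure {Ω : Type*} [MeasurableSpace Ω] (φ : Ω → Ω) (μ : Measure Ω) : Prop :=
  IsProbabilityMeasure μ ∧ (∀ e : Set Ω, MeasurableSet e → μ (φ ⁻¹' e) = μ e) ∧
    (∀ e : Set Ω, MeasurableSet e → φ ⁻¹' e = e → μ e = 0 ∨ μ e = 1)

/-- The support of a Borel measure: the smallest closed set of full measure
(the intersection of all closed sets of full measure). -/
def msupp {Ω : Type*} [TopologicalSpace Ω] [MeasurableSpace Ω] (μ : Measure Ω) : Set Ω :=
  ⋂₀ {s : Set Ω | IsClosed s ∧ μ sᶜ = 0}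

/-- The semicascade `(Ω,φ)` is tame: for every continuous `x` and every strictly increasing
sequence `n(1) < n(2) < ⋯`, the infimum over finitely supported real coefficients `a` with
`Σ|aₖ| = 1` of the sup-norms `‖Σₖ aₖ · (x ∘ φ^{n(k)})‖` is `0`. -/
def Tame {Ω : Type*} [TopologicalSpace Ω] [CompactSpace Ω] (φ : Ω → Ω)
    (hφ : Continuous φ) : Prop :=
  ∀ (x : C(Ω, ℝ)) (n : ℕ → ℕ), StrictMono n →
    sInf {r : ℝ | ∃ a : ℕ →₀ ℝ, (∑ k ∈ a.support, |a k|) = 1 ∧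
      r = ‖∑ k ∈ a.support, a k • x.comp ⟨φ^[n k], hφ.iterate (n k)⟩‖} = 0

/-- Points `a, b` are proximal: `inf_{n ≥ 0} d(φⁿ a, φⁿ b) = 0`. -/
def Proximal {Ω : Type*} [PseudoMetricSpace Ω] (φ : Ω → Ω) (a b : Ω) : Prop :=
  (⨅ n : ℕ, dist (φ^[n] a) (φ^[n] b)) = 0

/-!
By Rosenthal's splitting argument, tameness says that no sequence `x ∘ φ^[n k]` is independent at
two levels `r < s`. This property passes to the convex hull of the `x ∘ φ^[n]`: an independence free
bounded family is relatively compact in every `L¹(ρ)`, hence so is its convex hull, whereas an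
independent sequence is `L¹(ρ)`-separated for the limit `ρ` of the uniform measures on the points
realizing its finite patterns.

Let `Y` be an orbit closure with minimal set `m`, and let `μ` maximize `∫ x` among the invariant
measures on `Y`. Long Birkhoff averages of `x` on `Y` cannot exceed `∫ x ∂μ` by much, so by
invariance they come close to it on a part of every set of positive measure. If every invariant
measure on `m` gave `x` a smaller integral, then the averages would be strictly smaller near `m`,
and since `m` lies in the orbit closure of every point of `Y`, finitely many points can be brought
near `m` at the same time. So averages split any finite number of open sets of positive measure into
high and low parts, which builds an independent sequence. The same argument inside `m`, where open
sets meeting `m` are positive for all invariant measures, shows that `m` is uniquely ergodic. Hence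
`Y` is uniquely ergodic and its invariant measure is carried by `m`.

An ergodic measure has a point whose orbit is dense in its support, so the support is `m`. An
operator in the convex hull of the `V^n` is pushforward along a random number of iterations; for an
ergodic sequence, the images of a Dirac measure at `ω` can only accumulate at invariant measures on
the orbit closure of `ω`, so they converge, and dominated convergence handles general measures.
-/

section Independence

variable {Ω ι : Type*}

/-- A family of real functions is independent in the sense of Rosenthal, with respect to the levels
`r` and `s`, if every finite combination of the conditions `s < f i` and `f i < r`, with one
condition for each `i`, is satisfied at some point. -/
def RosenthalIndependent (f : ι → Ω → ℝ) (r s : ℝ) : Prop :=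
  ∀ (F : Finset ι) (A : Set ι), ∃ ω, ∀ i ∈ F, (i ∈ A → s < f i ω) ∧ (i ∉ A → f i ω < r)

/-- No sequence of members of the family is Rosenthal independent at two distinct levels. By
Rosenthal's dichotomy, for bounded families this says that no sequence of members of the family
spans a copy of `ℓ₁`. -/
def IndependenceFree (f : ι → Ω → ℝ) : Prop :=
  ∀ (u : ℕ → ι) (r s : ℝ), r < s → ¬ RosenthalIndependent (fun k => f (u k)) r s

theorem RosenthalIndependent.injective {f : ι → Ω → ℝ} {r s : ℝ} (hrs : r < s)
    (hf : RosenthalIndependent f r s) : Function.Injective f := by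
  classical
  intro i j hij
  by_contra hne
  obtain ⟨ω, hω⟩ := hf {i, j} {i}
  have hi := (hω i (by simp)).1 rfl
  have hj := (hω j (by simp)).2 (Ne.symm hne)
  rw [hij] at hi
  exact lt_asymm hrs (hi.trans hj)

theorem RosenthalIndependent.comp_injective {κ : Type*} {f : ι → Ω → ℝ} {r s : ℝ}
    (hf : RosenthalIndependent f r s) {v : κ → ι} (hv : Function.Injective v) :
    RosenthalIndependent (fun k => f (v k)) r s := by
  intro F A
  obtain ⟨ω, hω⟩ := hf (F.map ⟨v, hv⟩) (v '' A)
  refine ⟨ω, fun k hk => ?_⟩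
  simpa only [hv.mem_set_image] using hω (v k) (Finset.mem_map_of_mem ⟨v, hv⟩ hk)

theorem exists_rosenthalIndependent_of_splitting {f : ι → Ω → ℝ} {r s : ℝ} {P : Set Ω → Prop}
    {S₀ : Set Ω} (hS₀ : P S₀) (hne : ∀ S, P S → S.Nonempty)
    (hsplit : ∀ F : Finset (Set Ω), (∀ S ∈ F, P S) →
      ∃ i, ∀ S ∈ F, P (S ∩ {ω | s < f i ω}) ∧ P (S ∩ {ω | f i ω < r})) :
    ∃ u : ℕ → ι, RosenthalIndependent (fun k => f (u k)) r s := by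
  classical
  -- `x k` consists of the index chosen at step `k` and of the sets obtained so far by splitting.
  obtain ⟨x, hxP, hx⟩ := exists_seq_of_forall_finset_exists
    (fun y : ι × Finset (Set Ω) => y.2.Nonempty ∧ ∀ S ∈ y.2, P S)
    (fun y z => ∀ S ∈ y.2, S ∩ {ω | s < f z.1 ω} ∈ z.2 ∧ S ∩ {ω | f z.1 ω < r} ∈ z.2) fun Y hY => by
      let F : Finset (Set Ω) := insert S₀ (Y.biUnion Prod.snd)
      have hF : ∀ S, S ∈ F ↔ S = S₀ ∨ ∃ y ∈ Y, S ∈ y.2 := by simp [F]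
      obtain ⟨i, hi⟩ := hsplit F fun S hS => by
        rcases (hF S).1 hS with rfl | ⟨y, hy, hSy⟩
        exacts [hS₀, (hY y hy).2 S hSy]
      let G : Finset (Set Ω) := F.image (· ∩ {ω | s < f i ω}) ∪ F.image (· ∩ {ω | f i ω < r})
      have hG : ∀ S, S ∈ G ↔ ∃ T ∈ F, T ∩ {ω | s < f i ω} = S ∨ T ∩ {ω | f i ω < r} = S := by
        simp only [G, Finset.mem_union, Finset.mem_image]; grind
      exact ⟨(i, G), ⟨⟨_, (hG _).2 ⟨S₀, (hF _).2 (.inl rfl), .inl rfl⟩⟩, by grind⟩, by grind⟩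
  refine ⟨fun k => (x (k + 1)).1, fun F A => ?_⟩
  have hpath (k : ℕ) : ∃ S ∈ (x k).2, ∀ ω ∈ S, ∀ l < k,
      (l ∈ A → s < f (x (l + 1)).1 ω) ∧ (l ∉ A → f (x (l + 1)).1 ω < r) := by
    induction k with
    | zero => exact (hxP 0).1.imp fun S hS => ⟨hS, by simp⟩
    | succ k ih =>
      obtain ⟨S, hS, hSA⟩ := ih
      have hSx := hx k (k + 1) k.lt_succ_self S hS
      by_cases hk : k ∈ A
      · exact ⟨_, hSx.1, by grind⟩
      · exact ⟨_, hSx.2, by grind⟩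
  obtain ⟨S, hS, hSA⟩ := hpath (F.sup id + 1)
  obtain ⟨ω, hω⟩ := hne S ((hxP _).2 S hS)
  exact ⟨ω, fun i hi => hSA ω hω i (Nat.lt_succ_of_le (Finset.le_sup (f := id) hi))⟩

end Independence

section WeakLimit

theorem exists_forall_tendsto_inner_of_norm_le {𝕜 H ι : Type*} [RCLike 𝕜] [NormedAddCommGroup H]
    [InnerProductSpace 𝕜 H] [CompleteSpace H] (U : Ultrafilter ι) {v : ι → H} {C : ℝ}
    (hC : ∀ i, ‖v i‖ ≤ C) :
    ∃ w : H, ∀ u : H, Tendsto (fun i => inner 𝕜 (v i) u) U (𝓝 (inner 𝕜 w u)) := by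
  let V (i : ι) : WeakDual 𝕜 H := StrongDual.toWeakDual (InnerProductSpace.toDual 𝕜 H (v i))
  have hball : ∀ᶠ ψ in (U.map V : Filter (WeakDual 𝕜 H)),
      ψ ∈ WeakDual.toStrongDual ⁻¹' Metric.closedBall 0 C :=
    eventually_map.2 (.of_forall fun i => by simpa [V] using hC i)
  obtain ⟨ψ, -, hψ⟩ := (WeakDual.isCompact_closedBall (𝕜 := 𝕜) (E := H) 0 C).ultrafilter_le_nhds'
    _ hball
  obtain ⟨w, hw⟩ := (InnerProductSpace.toDual 𝕜 H).surjective (WeakDual.toStrongDual ψ)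
  refine ⟨w, fun u => ?_⟩
  have hψu : ψ u = inner 𝕜 w u := by
    rw [← InnerProductSpace.toDual_apply_apply, hw]; rfl
  rw [← hψu]
  exact ((WeakDual.eval_continuous (𝕜 := 𝕜) (E := H) u).tendsto ψ).comp hψ

end WeakLimit

section L1

variable {Ω ι : Type*} [MeasurableSpace Ω] {ρ : Measure Ω}

theorem exists_measure_inter_abs_sub_lt_pos {h : Ω → ℝ} (hh : 0 < ρ {ω | 0 < h ω}) (w : Ω → ℝ) :
    ∃ ε q : ℝ, 0 < ε ∧ 0 < ρ ({ω | ε < h ω} ∩ {ω | |w ω - q| < ε}) := by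
  by_contra! hnull
  have hcover : {ω | 0 < h ω} ⊆
      ⋃ (n : ℕ) (q : ℚ), {ω | 1 / (n + 1 : ℝ) < h ω} ∩ {ω | |w ω - q| < 1 / (n + 1 : ℝ)} := by
    intro ω hω
    obtain ⟨n, hn⟩ := exists_nat_one_div_lt (show 0 < h ω from hω)
    obtain ⟨q, hq⟩ := Metric.denseRange_iff.1 Rat.denseRange_cast (w ω) _
      (Nat.one_div_pos_of_nat (α := ℝ) (n := n))
    exact Set.mem_iUnion₂.2 ⟨n, q, hn, hq⟩
  refine hh.ne' (measure_mono_null hcover ?_)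
  simp only [measure_iUnion_null_iff]
  exact fun n q => le_zero_iff.1 (hnull _ q Nat.one_div_pos_of_nat)

variable [IsFiniteMeasure ρ]

theorem exists_forall_tendsto_setIntegral_of_norm_le (U : Ultrafilter ι) {f : ι → Lp ℝ 2 ρ} {C : ℝ}
    (hC : ∀ i, ‖f i‖ ≤ C) :
    ∃ w : Lp ℝ 2 ρ, ∀ S, MeasurableSet S →
      Tendsto (fun i => ∫ ω in S, f i ω ∂ρ) U (𝓝 (∫ ω in S, w ω ∂ρ)) := by
  obtain ⟨w, hw⟩ := exists_forall_tendsto_inner_of_norm_le (𝕜 := ℝ) U hC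
  refine ⟨w, fun S hS => ?_⟩
  have hinner (g : Lp ℝ 2 ρ) :
      inner ℝ g (indicatorConstLp 2 hS (measure_ne_top ρ S) 1) = ∫ ω in S, g ω ∂ρ := by
    rw [real_inner_comm, L2.inner_indicatorConstLp_one]
  simpa only [hinner] using hw (indicatorConstLp 2 hS (measure_ne_top ρ S) 1)

theorem exists_weakLimit_sub_and_abs_sub (U : Ultrafilter ι) {f : ι → Ω → ℝ}
    (hf : ∀ i, MemLp (f i) 2 ρ) {C : ℝ} (hC : ∀ i, ‖(hf i).toLp‖ ≤ C) :
    ∃ w h : Lp ℝ 2 ρ, ∀ S, MeasurableSet S →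
      Tendsto (fun i => ∫ ω in S, f i ω - w ω ∂ρ) U (𝓝 0) ∧
      Tendsto (fun i => ∫ ω in S, |f i ω - w ω| ∂ρ) U (𝓝 (∫ ω in S, h ω ∂ρ)) := by
  obtain ⟨w, hw⟩ := exists_forall_tendsto_setIntegral_of_norm_le U hC
  have hsub (i : ι) : ((hf i).toLp - w : Lp ℝ 2 ρ) =ᵐ[ρ] fun ω => f i ω - w ω := by
    filter_upwards [Lp.coeFn_sub (hf i).toLp w, (hf i).coeFn_toLp] with ω h₁ h₂
    rw [h₁, Pi.sub_apply, h₂]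
  obtain ⟨h, hh⟩ := exists_forall_tendsto_setIntegral_of_norm_le U
    (f := fun i => |(hf i).toLp - w|) (C := C + ‖w‖) fun i => by
      rw [norm_abs_eq_norm]
      exact (norm_sub_le _ _).trans (by gcongr; exact hC i)
  have hwint : Integrable w ρ := (Lp.memLp w).integrable one_le_two
  refine ⟨w, h, fun S hS => ⟨?_, (hh S hS).congr fun i => ?_⟩⟩
  · rw [← sub_self (∫ ω in S, w ω ∂ρ)]
    refine ((hw S hS).sub_const _).congr fun i => ?_
    rw [integral_sub ((hf i).integrable one_le_two).restrict hwint.restrict,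
      setIntegral_congr_ae hS ((hf i).coeFn_toLp.mono fun ω hω _ => hω)]
  · refine setIntegral_congr_ae hS ?_
    filter_upwards [Lp.coeFn_abs ((hf i).toLp - w), hsub i] with ω h₁ h₂ _
    rw [h₁, h₂]

theorem eventually_measure_inter_pos {l : Filter ι} {f : ι → Ω → ℝ} {w : Ω → ℝ}
    {S : Set Ω} {a q ε : ℝ} (hS : MeasurableSet S) (hf : ∀ i, Integrable (f i) ρ)
    (hw : Integrable w ρ) (hwq : ∀ ω ∈ S, |w ω - q| < ε)
    (hlim : Tendsto (fun i => ∫ ω in S, f i ω - w ω ∂ρ) l (𝓝 0))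
    (hlimabs : Tendsto (fun i => ∫ ω in S, |f i ω - w ω| ∂ρ) l (𝓝 a)) (ha : 4 * ε * ρ.real S < a) :
    ∀ᶠ i in l, 0 < ρ (S ∩ {ω | q + ε < f i ω}) := by
  have hsum := hlimabs.add hlim
  rw [add_zero] at hsum
  filter_upwards [hsum.eventually (lt_mem_nhds ha)] with i hi
  have hint : Integrable (fun ω => f i ω - w ω) (ρ.restrict S) := ((hf i).sub hw).restrict
  by_contra! hzero
  -- Almost everywhere on `S` we have `f i - w ≤ 2 * ε`, hence `|f i - w| + (f i - w) ≤ 4 * ε`.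
  have hle : ∀ᵐ ω ∂ρ.restrict S, |f i ω - w ω| + (f i ω - w ω) ≤ 4 * ε := by
    rw [ae_restrict_iff' hS]
    filter_upwards [measure_eq_zero_iff_ae_notMem.1 (le_zero_iff.1 hzero)] with ω hω hωS
    have hfq : f i ω ≤ q + ε := not_lt.1 fun h => hω ⟨hωS, h⟩
    grind
  have hbound := integral_mono_ae (hint.abs.add hint) (integrable_const _) hle
  have : ∫ ω in S, |f i ω - w ω| + (f i ω - w ω) ∂ρ ≤ 4 * ε * ρ.real S := by
    simpa [mul_comm] using hbound
  rw [integral_add hint.abs hint] at this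
  exact this.not_gt hi

theorem eventually_measure_inter_pos_and_pos {l : Filter ι} {f : ι → Ω → ℝ} {w : Ω → ℝ} {S : Set Ω}
    {a q ε : ℝ} (hS : MeasurableSet S) (hf : ∀ i, Integrable (f i) ρ) (hw : Integrable w ρ)
    (hwq : ∀ ω ∈ S, |w ω - q| < ε) (hlim : Tendsto (fun i => ∫ ω in S, f i ω - w ω ∂ρ) l (𝓝 0))
    (hlimabs : Tendsto (fun i => ∫ ω in S, |f i ω - w ω| ∂ρ) l (𝓝 a)) (ha : 4 * ε * ρ.real S < a) :
    ∀ᶠ i in l, 0 < ρ (S ∩ {ω | q + ε < f i ω}) ∧ 0 < ρ (S ∩ {ω | f i ω < q - ε}) := by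
  have hneg := eventually_measure_inter_pos (l := l) (f := fun i ω => -f i ω) (w := fun ω => -w ω)
    (q := -q) hS (fun i => (hf i).neg) hw.neg
    (fun ω hω => by rw [neg_sub_neg, abs_sub_comm]; exact hwq ω hω)
    (by simpa [neg_add_eq_sub, integral_sub, ← integral_neg] using hlim.neg)
    (by simpa [neg_add_eq_sub, abs_sub_comm] using hlimabs) ha
  filter_upwards [eventually_measure_inter_pos hS hf hw hwq hlim hlimabs ha, hneg] with i hi hi'
  have hset : {ω | -q + ε < -f i ω} = {ω | f i ω < q - ε} := by
    ext ω; simp only [Set.mem_ofPred_eq]; grind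
  exact ⟨hi, hset ▸ hi'⟩

theorem mul_measureReal_lt_setIntegral {h : Ω → ℝ} {S : Set Ω} {c : ℝ} (hS : MeasurableSet S)
    (hh : IntegrableOn h S ρ) (hpos : 0 < ρ S) (hc : ∀ ω ∈ S, c < h ω) :
    c * ρ.real S < ∫ ω in S, h ω ∂ρ := by
  have hsub : 0 < ∫ ω in S, h ω - c ∂ρ := by
    refine (setIntegral_pos_iff_support_of_nonneg_ae ?_ (hh.sub integrableOn_const)).2 ?_
    · filter_upwards [ae_restrict_mem hS] with ω hω using sub_nonneg.2 (hc ω hω).le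
    · have hsupport : S ⊆ Function.support (h - fun _ => c) := fun ω hω =>
        (sub_pos.2 (hc ω hω)).ne'
      rwa [Set.inter_eq_right.2 hsupport]
  rw [integral_sub hh integrableOn_const, setIntegral_const, smul_eq_mul] at hsub
  linarith

theorem IndependenceFree.weakLimit_abs_sub_ae_nonpos {f : ι → Ω → ℝ}
    (hfree : IndependenceFree f) (U : Ultrafilter ι) (hfm : ∀ i, Measurable (f i))
    (hf : ∀ i, Integrable (f i) ρ) {w h : Ω → ℝ} (hwm : Measurable w) (hw : Integrable w ρ)
    (hhm : Measurable h) (hh : Integrable h ρ)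
    (hlim : ∀ S, MeasurableSet S →
      Tendsto (fun i => ∫ ω in S, f i ω - w ω ∂ρ) U (𝓝 0) ∧
      Tendsto (fun i => ∫ ω in S, |f i ω - w ω| ∂ρ) U (𝓝 (∫ ω in S, h ω ∂ρ))) :
    h ≤ᵐ[ρ] 0 := by
  suffices hnull : ρ {ω | 0 < h ω} = 0 by
    filter_upwards [measure_eq_zero_iff_ae_notMem.1 hnull] with ω hω using not_lt.1 hω
  by_contra hpos
  obtain ⟨ε, q, hε, hS₀⟩ := exists_measure_inter_abs_sub_lt_pos
    (h := fun ω => h ω / 4) (by simpa [pos_iff_ne_zero] using hpos) w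
  set S₀ := {ω | ε < h ω / 4} ∩ {ω | |w ω - q| < ε}
  have hS₀m : MeasurableSet S₀ := (measurableSet_lt measurable_const (hhm.div_const 4)).inter
    (measurableSet_lt (hwm.sub_const q).abs measurable_const)
  let P (S : Set Ω) : Prop := MeasurableSet S ∧ S ⊆ S₀ ∧ 0 < ρ S
  have hsplit (S : Set Ω) (hS : P S) :
      ∀ᶠ i in U, P (S ∩ {ω | q + ε < f i ω}) ∧ P (S ∩ {ω | f i ω < q - ε}) := by
    obtain ⟨hSm, hSS₀, hSpos⟩ := hS
    have hlt : 4 * ε * ρ.real S < ∫ ω in S, h ω ∂ρ :=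
      mul_measureReal_lt_setIntegral hSm hh.integrableOn hSpos fun ω hω => by
        linarith [show ε < h ω / 4 from (hSS₀ hω).1]
    filter_upwards [eventually_measure_inter_pos_and_pos hSm hf hw (fun ω hω => (hSS₀ hω).2)
      (hlim S hSm).1 (hlim S hSm).2 hlt] with i hi
    exact ⟨⟨hSm.inter (measurableSet_lt measurable_const (hfm i)),
        Set.inter_subset_left.trans hSS₀, hi.1⟩,
      ⟨hSm.inter (measurableSet_lt (hfm i) measurable_const),
        Set.inter_subset_left.trans hSS₀, hi.2⟩⟩
  obtain ⟨u, hu⟩ := exists_rosenthalIndependent_of_splitting (P := P) (f := f) (r := q - ε)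
    (s := q + ε) ⟨hS₀m, subset_rfl, hS₀⟩ (fun S hS => nonempty_of_measure_ne_zero hS.2.2.ne')
    fun F hF => ((Finset.eventually_all F).2 fun S hS => hsplit S (hF S hS)).exists
  exact hfree u _ _ (by linarith) hu

theorem IndependenceFree.exists_tendsto_integral_abs_sub {f : ι → Ω → ℝ}
    (hfree : IndependenceFree f) (U : Ultrafilter ι) (hfm : ∀ i, Measurable (f i))
    (hf : ∀ i, MemLp (f i) 2 ρ) {C : ℝ} (hC : ∀ i, ‖(hf i).toLp‖ ≤ C) :
    ∃ w : Ω → ℝ, Integrable w ρ ∧ Tendsto (fun i => ∫ ω, |f i ω - w ω| ∂ρ) U (𝓝 0) := by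
  obtain ⟨w, h, hlim⟩ := exists_weakLimit_sub_and_abs_sub U hf hC
  have hint (g : Lp ℝ 2 ρ) : Integrable g ρ := (Lp.memLp g).integrable one_le_two
  have hh : h ≤ᵐ[ρ] 0 := hfree.weakLimit_abs_sub_ae_nonpos U hfm
    (fun i => (hf i).integrable one_le_two) (Lp.stronglyMeasurable w).measurable (hint w)
    (Lp.stronglyMeasurable h).measurable (hint h) hlim
  have habs : Tendsto (fun i => ∫ ω, |f i ω - w ω| ∂ρ) U (𝓝 (∫ ω, h ω ∂ρ)) := by
    simpa only [setIntegral_univ] using (hlim Set.univ .univ).2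
  have hzero : ∫ ω, h ω ∂ρ = 0 := (integral_nonpos_of_ae hh).antisymm
    (ge_of_tendsto' habs fun i => integral_nonneg fun ω => abs_nonneg _)
  exact ⟨w, hint w, hzero ▸ habs⟩

theorem dist_toLp_one {f g : Ω → ℝ} {μ : Measure Ω} (hf : MemLp f 1 μ) (hg : MemLp g 1 μ) :
    dist hf.toLp hg.toLp = ∫ ω, |f ω - g ω| ∂μ := by
  rw [dist_eq_norm, ← MemLp.toLp_sub, L1.norm_eq_integral_norm]
  refine integral_congr_ae ?_
  filter_upwards [(hf.sub hg).coeFn_toLp] with ω hω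
  rw [hω, Pi.sub_apply, Real.norm_eq_abs]

theorem IndependenceFree.totallyBounded_range_toLp {f : ι → Ω → ℝ} (hfree : IndependenceFree f)
    (hfm : ∀ i, Measurable (f i)) (hf : ∀ i, MemLp (f i) 2 ρ) {C : ℝ}
    (hC : ∀ i, ‖(hf i).toLp‖ ≤ C) :
    TotallyBounded (Set.range fun i => ((hf i).mono_exponent one_le_two).toLp (p := 1)) := by
  set F : ι → Lp ℝ 1 ρ := fun i => ((hf i).mono_exponent one_le_two).toLp
  refine totallyBounded_iff_ultrafilter.2 fun V hV => ?_
  obtain ⟨y₀, i₀, -⟩ := V.nonempty_of_mem (le_principal_iff.1 hV)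
  have : Nonempty ι := ⟨i₀⟩
  have hsection : F ∘ Function.invFun F =ᶠ[V] id :=
    mem_of_superset (le_principal_iff.1 hV) fun y hy => Function.invFun_eq hy
  obtain ⟨w, hw, hlim⟩ :=
    hfree.exists_tendsto_integral_abs_sub (V.map (Function.invFun F)) hfm hf hC
  have hdist : Tendsto F (V.map (Function.invFun F)) (𝓝 (memLp_one_iff_integrable.2 hw).toLp) :=
    tendsto_iff_dist_tendsto_zero.2 (by simpa only [F, dist_toLp_one] using hlim)
  exact cauchy_nhds.mono ((tendsto_map'_iff.1 hdist).congr' hsection)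

end L1

section EmpiricalMeasure

variable {Ω κ : Type*} [MeasurableSpace Ω]

/-- The uniform probability distribution on the points `p a`, `a ∈ S`, counted with multiplicity. -/
noncomputable def empiricalMeasure (S : Finset κ) (p : κ → Ω) : Measure Ω :=
  (S.card : ENNReal)⁻¹ • ∑ a ∈ S, Measure.dirac (p a)

theorem isProbabilityMeasure_empiricalMeasure {S : Finset κ} (hS : S.Nonempty) (p : κ → Ω) :
    IsProbabilityMeasure (empiricalMeasure S p) :=
  ⟨by simp [empiricalMeasure, ENNReal.inv_mul_cancel, hS.ne_empty]⟩

theorem integral_empiricalMeasure (S : Finset κ) (p : κ → Ω) {f : Ω → ℝ} (hf : Measurable f) :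
    ∫ ω, f ω ∂empiricalMeasure S p = (S.card : ℝ)⁻¹ * ∑ a ∈ S, f (p a) := by
  have hint (a : κ) (_ : a ∈ S) : Integrable f (Measure.dirac (p a)) :=
    integrable_dirac' hf.stronglyMeasurable (by simp)
  rw [empiricalMeasure, integral_smul_measure, integral_finsetSum_measure hint]
  simp [integral_dirac' _ _ hf.stronglyMeasurable]

theorem empiricalMeasure_apply_eq_zero {S : Finset κ} {p : κ → Ω} {e : Set Ω}
    (he : MeasurableSet e) (h : ∀ a ∈ S, p a ∉ e) : empiricalMeasure S p e = 0 := by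
  have hsum : ∑ a ∈ S, Measure.dirac (p a) e = 0 :=
    Finset.sum_eq_zero fun a ha => by
      rw [Measure.dirac_apply' _ he, Set.indicator_of_notMem (h a ha)]
  rw [empiricalMeasure, Measure.smul_apply, Measure.finsetSum_apply, hsum, smul_zero]

end EmpiricalMeasure

theorem half_le_average_powerset {ι : Type*} [DecidableEq ι] {F : Finset ι} {i : ι} (hi : i ∈ F)
    {Q : Finset ι → ℝ} {d : ℝ} (hQ : ∀ A ⊆ F.erase i, d ≤ Q A + Q (insert i A)) :
    d / 2 ≤ (F.powerset.card : ℝ)⁻¹ * ∑ A ∈ F.powerset, Q A := by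
  obtain ⟨G, hiG, rfl⟩ : ∃ G, i ∉ G ∧ insert i G = F :=
    ⟨F.erase i, Finset.notMem_erase i F, Finset.insert_erase hi⟩
  rw [Finset.erase_insert hiG] at hQ
  have hsum := Finset.card_nsmul_le_sum G.powerset _ d fun A hA => hQ A (Finset.mem_powerset.1 hA)
  rw [Finset.sum_add_distrib, Finset.card_powerset, nsmul_eq_mul] at hsum
  rw [Finset.sum_powerset_insert hiG, Finset.card_powerset, Finset.card_insert_of_notMem hiG,
    le_inv_mul_iff₀ (by positivity)]
  push_cast at hsum ⊢
  rw [pow_succ]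
  linarith

section Independence

variable {Ω ι : Type*} [TopologicalSpace Ω] [CompactSpace Ω]

theorem tendsto_integral_of_tendsto_probabilityMeasure [MeasurableSpace Ω] [OpensMeasurableSpace Ω]
    {l : Filter ι} {μ : ι → ProbabilityMeasure Ω} {ν : ProbabilityMeasure Ω}
    (h : Tendsto μ l (𝓝 ν)) (x : C(Ω, ℝ)) :
    Tendsto (fun i => ∫ ω, x ω ∂(μ i : Measure Ω)) l (𝓝 (∫ ω, x ω ∂(ν : Measure Ω))) :=
  ((ProbabilityMeasure.continuous_integral_continuousMap x).tendsto ν).comp h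

theorem IndependenceFree.totallyBounded_toLp_range [MeasurableSpace Ω] [BorelSpace Ω]
    {f : ι → C(Ω, ℝ)} (hf : IndependenceFree fun i => ⇑(f i)) {C : ℝ} (hC : ∀ i, ‖f i‖ ≤ C)
    (ρ : Measure Ω) [IsFiniteMeasure ρ] :
    TotallyBounded (ContinuousMap.toLp (E := ℝ) 1 ρ ℝ '' Set.range f) := by
  let J : C(Ω, ℝ) →L[ℝ] Lp ℝ 2 ρ := ContinuousMap.toLp 2 ρ ℝ
  rw [← Set.range_comp]
  exact hf.totallyBounded_range_toLp (fun i => (f i).continuous.measurable)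
    (fun i => (f i).memLp ρ ℝ) (C := ‖J‖ * C) fun i => J.le_opNorm_of_le (hC i)

theorem exists_ne_dist_lt_of_totallyBounded {X : Type*} [PseudoMetricSpace X] {x : ℕ → X}
    {S : Set X} (hS : TotallyBounded S) (hx : ∀ k, x k ∈ S) {ε : ℝ} (hε : 0 < ε) :
    ∃ i j, i ≠ j ∧ dist (x i) (x j) < ε := by
  obtain ⟨t, ht, hcover⟩ := Metric.totallyBounded_iff.1 hS (ε / 2) (half_pos hε)
  have := ht.to_subtype
  choose c hc using fun k => Set.mem_iUnion₂.1 (hcover (hx k))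
  choose hct hball using hc
  obtain ⟨i, j, hij, hcij⟩ :=
    Finite.exists_ne_map_eq_of_infinite fun k => (⟨c k, hct k⟩ : t)
  refine ⟨i, j, hij, ?_⟩
  have hcc : c i = c j := congrArg Subtype.val hcij
  have hi := Metric.mem_ball.1 (hball i)
  have hj := Metric.mem_ball'.1 (hball j)
  rw [hcc] at hi
  linarith [dist_triangle (x i) (c j) (x j)]

variable [T2Space Ω]

theorem exists_tendsto_probabilityMeasure [MeasurableSpace Ω] [BorelSpace Ω] (U : Ultrafilter ι)
    (μ : ι → ProbabilityMeasure Ω) : ∃ ν, Tendsto μ U (𝓝 ν) :=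
  ⟨_, (U.map μ).le_nhds_lim⟩

theorem RosenthalIndependent.exists_le_integral_abs_sub [MeasurableSpace Ω] [BorelSpace Ω]
    {g : ι → C(Ω, ℝ)} {r s : ℝ} (hg : RosenthalIndependent (fun i => ⇑(g i)) r s) :
    ∃ ρ : ProbabilityMeasure Ω,
      ∀ i j, i ≠ j → (s - r) / 2 ≤ ∫ ω, |g i ω - g j ω| ∂(ρ : Measure Ω) := by
  classical
  choose p hp using fun F A : Finset ι => hg F A
  have hprob (F : Finset ι) := isProbabilityMeasure_empiricalMeasure (Finset.powerset_nonempty F)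
    (p F)
  let U : Ultrafilter (Finset ι) := .of atTop
  obtain ⟨ρ, hρ⟩ := exists_tendsto_probabilityMeasure U fun F =>
    ⟨empiricalMeasure F.powerset (p F), hprob F⟩
  refine ⟨ρ, fun i j hij => ?_⟩
  refine ge_of_tendsto (tendsto_integral_of_tendsto_probabilityMeasure hρ |g i - g j|) ?_
  filter_upwards [Ultrafilter.of_le atTop (eventually_ge_atTop {i, j})] with F hF
  have hiF : i ∈ F := hF (by simp)
  have hjF : j ∈ F := hF (by simp)
  refine (half_le_average_powerset hiF fun A hA => ?_).trans_eq
    (integral_empiricalMeasure _ _ |g i - g j|.continuous.measurable).symm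
  change s - r ≤ |g i (p F A) - g j (p F A)| + |g i (p F (insert i A)) - g j (p F (insert i A))|
  have hiA : g i (p F A) < r := (hp F A i hiF).2 fun h => Finset.notMem_erase i F (hA h)
  have hiA' : s < g i (p F (insert i A)) := (hp F _ i hiF).1 (by simp)
  by_cases hjA : j ∈ A
  · have hj : s < g j (p F A) := (hp F A j hjF).1 hjA
    grind
  · have hj : g j (p F (insert i A)) < r := (hp F _ j hjF).2 (by simp [hij.symm, hjA])
    grind

theorem IndependenceFree.convexHull_range {f : ι → C(Ω, ℝ)}
    (hf : IndependenceFree fun i => ⇑(f i)) {C : ℝ} (hC : ∀ i, ‖f i‖ ≤ C) :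
    IndependenceFree fun g : convexHull ℝ (Set.range f) => ⇑(g : C(Ω, ℝ)) := by
  intro g r s hrs hg
  borelize Ω
  obtain ⟨ρ, hρ⟩ := RosenthalIndependent.exists_le_integral_abs_sub
    (g := fun k => (g k : C(Ω, ℝ))) hg
  let J : C(Ω, ℝ) →L[ℝ] Lp ℝ 1 (ρ : Measure Ω) := ContinuousMap.toLp 1 (ρ : Measure Ω) ℝ
  have hbdd : TotallyBounded (J '' convexHull ℝ (Set.range f)) := by
    rw [← J.coe_coe, LinearMap.image_convexHull, totallyBounded_convexHull]
    exact hf.totallyBounded_toLp_range hC ρ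
  obtain ⟨i, j, hij, hlt⟩ := exists_ne_dist_lt_of_totallyBounded (x := fun k => J (g k)) hbdd
    (fun k => Set.mem_image_of_mem J (g k).2) (half_pos (sub_pos.2 hrs))
  refine (hρ i j hij).not_gt (lt_of_eq_of_lt ?_ hlt)
  exact (dist_toLp_one ((g i : C(Ω, ℝ)).memLp _ ℝ) ((g j : C(Ω, ℝ)).memLp _ ℝ)).symm

end Independence

section Tame

variable {Ω : Type*} [TopologicalSpace Ω] [CompactSpace Ω]

theorem RosenthalIndependent.mul_sum_abs_le_norm_sum_smul {ι : Type*} {g : ι → C(Ω, ℝ)} {r s : ℝ}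
    (hg : RosenthalIndependent (fun i => ⇑(g i)) r s) (F : Finset ι) (a : ι → ℝ) :
    (s - r) / 2 * ∑ i ∈ F, |a i| ≤ ‖∑ i ∈ F, a i • g i‖ := by
  obtain ⟨ω, hω⟩ := hg F {i | 0 < a i}
  obtain ⟨ω', hω'⟩ := hg F {i | 0 < a i}ᶜ
  set G := ∑ i ∈ F, a i • g i with hG
  have hterm : ∀ i ∈ F, (s - r) * |a i| ≤ a i * g i ω - a i * g i ω' := by
    intro i hi
    obtain hpos | hneg := lt_or_ge 0 (a i)
    · have hs := (hω i hi).1 hpos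
      have hr := (hω' i hi).2 (not_not_intro hpos)
      rw [abs_of_pos hpos]
      nlinarith
    · have hr := (hω i hi).2 hneg.not_gt
      have hs := (hω' i hi).1 hneg.not_gt
      rw [abs_of_nonpos hneg]
      nlinarith
  have hdiff : (s - r) * ∑ i ∈ F, |a i| ≤ G ω - G ω' := by
    rw [Finset.mul_sum]
    refine (Finset.sum_le_sum hterm).trans_eq ?_
    simp [hG]
  have hle := (le_abs_self _).trans (G.norm_coe_le_norm ω)
  have hge := (neg_le_abs _).trans (G.norm_coe_le_norm ω')
  linarith

theorem Tame.independenceFree {φ : Ω → Ω} {hφ : Continuous φ} (htame : Tame φ hφ) (x : C(Ω, ℝ)) :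
    IndependenceFree fun n ω => x (φ^[n] ω) := by
  intro u r s hrs hu
  have huinj : Function.Injective u := fun i j hij => hu.injective hrs (by simp only [hij])
  obtain ⟨v, hv, hmono⟩ := strictMono_subseq_of_tendsto_atTop huinj.nat_tendsto_atTop
  let g (k : ℕ) : C(Ω, ℝ) := x.comp ⟨φ^[u (v k)], hφ.iterate (u (v k))⟩
  have hind : RosenthalIndependent (fun k => ⇑(g k)) r s := hu.comp_injective hv.injective
  have hle : (s - r) / 2 ≤ sInf {t : ℝ | ∃ a : ℕ →₀ ℝ, ∑ k ∈ a.support, |a k| = 1 ∧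
      t = ‖∑ k ∈ a.support, a k • g k‖} := by
    refine le_csInf ⟨_, Finsupp.single 0 1, by simp, rfl⟩ ?_
    rintro _ ⟨a, ha, rfl⟩
    simpa [ha] using hind.mul_sum_abs_le_norm_sum_smul a.support a
  have hinf := hle.trans_eq (htame x _ hmono)
  linarith

end Tame

section InvariantMeasures

/-- The invariant Borel probability measures of the map `φ` that are carried by the set `Y`. -/
def invariantMeasures {Ω : Type*} [MeasurableSpace Ω] (φ : Ω → Ω) (Y : Set Ω) :
    Set (ProbabilityMeasure Ω) :=
  {μ | MeasurePreserving φ (μ : Measure Ω) μ ∧ (μ : Measure Ω) Yᶜ = 0}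

theorem integral_empiricalMeasure_range {Ω : Type*} [MeasurableSpace Ω] (φ : Ω → Ω) (N : ℕ)
    (z : Ω) {f : Ω → ℝ} (hf : Measurable f) :
    ∫ ω, f ω ∂empiricalMeasure (Finset.range N) (fun n => φ^[n] z) = birkhoffAverage ℝ φ f N z := by
  rw [integral_empiricalMeasure _ _ hf, Finset.card_range, birkhoffAverage, birkhoffSum,
    smul_eq_mul]

theorem birkhoffAverage_comp {α R M : Type*} [DivisionSemiring R] [AddCommMonoid M] [Module R M]
    (φ : α → α) (g : α → M) (N : ℕ) (z : α) :
    birkhoffAverage R φ (fun ω => g (φ ω)) N z = birkhoffAverage R φ g N (φ z) := by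
  simp only [birkhoffAverage, birkhoffSum, ← Function.iterate_succ_apply,
    ← Function.iterate_succ_apply']

theorem tendsto_birkhoffAverage_apply_sub_of_tendsto_atTop {Ω ι : Type*} [TopologicalSpace Ω]
    [CompactSpace Ω] (φ : Ω → Ω) (x : C(Ω, ℝ)) {l : Filter ι} {N : ι → ℕ} (hN : Tendsto N l atTop)
    (z : ι → Ω) :
    Tendsto (fun i => birkhoffAverage ℝ φ x (N i) (φ (z i)) - birkhoffAverage ℝ φ x (N i) (z i))
      l (𝓝 0) := by
  have hlim : Tendsto (fun i => 2 * ‖x‖ / N i) l (𝓝 0) :=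
    (tendsto_const_nhds.div_atTop tendsto_natCast_atTop_atTop).comp hN
  refine squeeze_zero_norm (fun i => ?_) hlim
  rw [← dist_eq_norm, dist_birkhoffAverage_apply_birkhoffAverage]
  gcongr
  exact x.dist_le_two_norm _ _

variable {Ω ι : Type*} [TopologicalSpace Ω] [MeasurableSpace Ω]
  [TopologicalSpace.MetrizableSpace Ω] [BorelSpace Ω] {φ : Ω → Ω} {Y : Set Ω}

theorem measure_compl_eq_zero_of_tendsto {l : Filter ι} [l.NeBot] {μ : ι → ProbabilityMeasure Ω}
    {ν : ProbabilityMeasure Ω} (h : Tendsto μ l (𝓝 ν)) (hY : IsClosed Y)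
    (hμ : ∀ᶠ i in l, (μ i : Measure Ω) Yᶜ = 0) : (ν : Measure Ω) Yᶜ = 0 := by
  rw [prob_compl_eq_zero_iff hY.measurableSet]
  refine prob_le_one.antisymm (le_of_eq_of_le ?_
    (ProbabilityMeasure.limsup_measure_closed_le_of_tendsto h hY))
  refine (Tendsto.limsup_eq (tendsto_const_nhds.congr' ?_)).symm
  filter_upwards [hμ] with i hi using ((prob_compl_eq_zero_iff hY.measurableSet).1 hi).symm

theorem measurePreserving_of_forall_integral_comp_eq {μ : Measure Ω} [IsFiniteMeasure μ]
    (hφ : Continuous φ) (h : ∀ x : C(Ω, ℝ), ∫ ω, x (φ ω) ∂μ = ∫ ω, x ω ∂μ) :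
    MeasurePreserving φ μ μ := by
  refine ⟨hφ.measurable, ext_of_forall_integral_eq_of_IsFiniteMeasure fun f => ?_⟩
  rw [integral_map hφ.aemeasurable f.continuous.aestronglyMeasurable]
  exact h f.toContinuousMap

variable [CompactSpace Ω]

theorem mem_invariantMeasures_of_tendsto (hφ : Continuous φ) (hY : IsClosed Y) {l : Filter ι}
    [l.NeBot] {μ : ι → ProbabilityMeasure Ω} {ν : ProbabilityMeasure Ω} (h : Tendsto μ l (𝓝 ν))
    (hμ : ∀ᶠ i in l, (μ i : Measure Ω) Yᶜ = 0)
    (hinv : ∀ x : C(Ω, ℝ), Tendsto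
      (fun i => ∫ ω, x (φ ω) ∂(μ i : Measure Ω) - ∫ ω, x ω ∂(μ i : Measure Ω)) l (𝓝 0)) :
    ν ∈ invariantMeasures φ Y := by
  refine ⟨measurePreserving_of_forall_integral_comp_eq hφ fun x => ?_,
    measure_compl_eq_zero_of_tendsto h hY hμ⟩
  exact sub_eq_zero.1 <| tendsto_nhds_unique
    ((tendsto_integral_of_tendsto_probabilityMeasure h (x.comp ⟨φ, hφ⟩)).sub
      (tendsto_integral_of_tendsto_probabilityMeasure h x)) (hinv x)

theorem isCompact_invariantMeasures (hφ : Continuous φ) (hY : IsClosed Y) :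
    IsCompact (invariantMeasures φ Y) := by
  refine isCompact_iff_ultrafilter_le_nhds.2 fun U hU => ?_
  obtain ⟨ν, hν⟩ := exists_tendsto_probabilityMeasure U id
  have hmem : ∀ᶠ μ in U, μ ∈ invariantMeasures φ Y := le_principal_iff.1 hU
  refine ⟨ν, mem_invariantMeasures_of_tendsto hφ hY hν (hmem.mono fun μ hμ => hμ.2) fun x => ?_, hν⟩
  refine tendsto_const_nhds.congr' ?_
  filter_upwards [hmem] with μ hμ
  rw [id, ← integral_map hφ.aemeasurable x.continuous.aestronglyMeasurable, hμ.1.map_eq, sub_self]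

theorem exists_mem_invariantMeasures_isMaxOn_integral (hφ : Continuous φ) (hY : IsClosed Y)
    (hne : (invariantMeasures φ Y).Nonempty) (x : C(Ω, ℝ)) :
    ∃ μ ∈ invariantMeasures φ Y, ∀ ν ∈ invariantMeasures φ Y,
      ∫ ω, x ω ∂(ν : Measure Ω) ≤ ∫ ω, x ω ∂(μ : Measure Ω) :=
  (isCompact_invariantMeasures hφ hY).exists_isMaxOn hne
    (ProbabilityMeasure.continuous_integral_continuousMap x).continuousOn

theorem exists_tendsto_birkhoffAverage_integral (hφ : Continuous φ) (hY : IsClosed Y)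
    (hYφ : Set.MapsTo φ Y Y) {U : Ultrafilter ι} {N : ι → ℕ} (hN : Tendsto N U atTop)
    (hN₀ : ∀ i, N i ≠ 0) {z : ι → Ω} (hz : ∀ i, z i ∈ Y) :
    ∃ ν ∈ invariantMeasures φ Y, ∀ x : C(Ω, ℝ),
      Tendsto (fun i => birkhoffAverage ℝ φ x (N i) (z i)) U (𝓝 (∫ ω, x ω ∂(ν : Measure Ω))) := by
  let p (i : ι) (n : ℕ) : Ω := φ^[n] (z i)
  have hprob (i : ι) : IsProbabilityMeasure (empiricalMeasure (Finset.range (N i)) (p i)) :=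
    isProbabilityMeasure_empiricalMeasure (Finset.nonempty_range_iff.2 (hN₀ i)) (p i)
  obtain ⟨ν, hν⟩ := exists_tendsto_probabilityMeasure U fun i => ⟨_, hprob i⟩
  refine ⟨ν, mem_invariantMeasures_of_tendsto hφ hY hν (.of_forall fun i => ?_) fun x => ?_,
    fun x => ?_⟩
  · exact empiricalMeasure_apply_eq_zero hY.measurableSet.compl fun n _ =>
      not_not_intro (hYφ.iterate n (hz i))
  · refine (tendsto_birkhoffAverage_apply_sub_of_tendsto_atTop φ x hN z).congr fun i => ?_
    rw [← birkhoffAverage_comp]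
    exact congrArg₂ (· - ·)
      (integral_empiricalMeasure_range φ _ _ (x.continuous.comp hφ).measurable).symm
      (integral_empiricalMeasure_range φ _ _ x.continuous.measurable).symm
  · refine (tendsto_integral_of_tendsto_probabilityMeasure hν x).congr fun i => ?_
    exact integral_empiricalMeasure_range φ _ _ x.continuous.measurable

theorem invariantMeasures_nonempty (hφ : Continuous φ) (hY : IsClosed Y) (hYφ : Set.MapsTo φ Y Y)
    (hne : Y.Nonempty) : (invariantMeasures φ Y).Nonempty := by
  obtain ⟨z, hz⟩ := hne
  obtain ⟨ν, hν, -⟩ := exists_tendsto_birkhoffAverage_integral hφ hY hYφ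
    (U := hyperfilter ℕ) (N := Nat.succ) (z := fun _ => z)
    ((tendsto_add_atTop_nat 1).mono_left Nat.hyperfilter_le_atTop) Nat.succ_ne_zero fun _ => hz
  exact ⟨ν, hν⟩

theorem eventually_forall_birkhoffAverage_lt (hφ : Continuous φ) (hY : IsClosed Y)
    (hYφ : Set.MapsTo φ Y Y) {x : C(Ω, ℝ)} {s t : ℝ} (hst : s < t)
    (hs : ∀ ν ∈ invariantMeasures φ Y, ∫ ω, x ω ∂(ν : Measure Ω) ≤ s) :
    ∀ᶠ N in atTop, ∀ z ∈ Y, birkhoffAverage ℝ φ x N z < t := by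
  by_contra hfreq
  simp only [eventually_atTop, not_exists, not_forall, not_lt] at hfreq
  choose N hN z hz ht using fun i : ℕ => hfreq (i + 1)
  obtain ⟨ν, hν, hlim⟩ := exists_tendsto_birkhoffAverage_integral hφ hY hYφ
    (U := hyperfilter ℕ) (N := N) (z := z)
    ((tendsto_atTop_mono (fun i => (Nat.le_succ i).trans (hN i)) tendsto_id).mono_left
      Nat.hyperfilter_le_atTop) (fun i => (Nat.succ_pos i |>.trans_le (hN i)).ne') hz
  exact (ge_of_tendsto' (hlim x) ht).not_gt ((hs ν hν).trans_lt hst)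

end InvariantMeasures

section Averages

theorem measure_inter_sub_lt_pos {Ω : Type*} [MeasurableSpace Ω] {μ : Measure Ω}
    [IsProbabilityMeasure μ] {g : Ω → ℝ} {S : Set Ω} {s d δ : ℝ} (hS : MeasurableSet S)
    (hg : Integrable g μ) (hδ : 0 ≤ δ) (hle : ∀ᵐ ω ∂μ, g ω ≤ s + δ) (hs : s ≤ ∫ ω, g ω ∂μ)
    (hδd : δ < d * μ.real S) : 0 < μ (S ∩ {ω | s - d < g ω}) := by
  by_contra! hzero
  have hbound : ∀ᵐ ω ∂μ, g ω ≤ s + δ - S.indicator (fun _ => d) ω := by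
    filter_upwards [hle, measure_eq_zero_iff_ae_notMem.1 (le_zero_iff.1 hzero)] with ω hω hωS
    by_cases hmem : ω ∈ S
    · have hgd : g ω ≤ s - d := not_lt.1 fun h => hωS ⟨hmem, h⟩
      rw [Set.indicator_of_mem hmem]
      linarith
    · rwa [Set.indicator_of_notMem hmem, sub_zero]
  have hint : Integrable (S.indicator fun _ => d) μ := (integrable_const d).indicator hS
  have hle' := integral_mono_ae hg ((integrable_const _).sub hint) hbound
  simp only [Pi.sub_apply] at hle'
  rw [integral_sub (integrable_const _) hint, integral_indicator_const d hS] at hle'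
  simp only [integral_const, probReal_univ, smul_eq_mul] at hle'
  linarith

section Topological

variable {Ω : Type*} [TopologicalSpace Ω] {φ : Ω → Ω}

theorem continuous_birkhoffAverage (hφ : Continuous φ) (x : C(Ω, ℝ)) (N : ℕ) :
    Continuous (birkhoffAverage ℝ φ x N) := by
  change Continuous fun ω => (N : ℝ)⁻¹ • ∑ n ∈ Finset.range N, x (φ^[n] ω)
  exact (continuous_finsetSum _ fun n _ => x.continuous.comp (hφ.iterate n)).const_smul (N : ℝ)⁻¹

theorem exists_mem_convexHull_eq_birkhoffAverage (hφ : Continuous φ) (x : C(Ω, ℝ)) {N : ℕ}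
    (hN : N ≠ 0) (n : ℕ) :
    ∃ g ∈ convexHull ℝ (Set.range fun k => x.comp ⟨φ^[k], hφ.iterate k⟩),
      ∀ ω, g ω = birkhoffAverage ℝ φ x N (φ^[n] ω) := by
  refine ⟨∑ i ∈ Finset.range N, (N : ℝ)⁻¹ • x.comp ⟨φ^[i + n], hφ.iterate (i + n)⟩,
    (convex_convexHull ℝ _).sum_mem (fun _ _ => by positivity) ?_
      (fun i _ => subset_convexHull _ _ ⟨i + n, rfl⟩), fun ω => ?_⟩
  · simp [hN]
  · simp [birkhoffAverage, birkhoffSum, Finset.mul_sum, Function.iterate_add_apply]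

theorem IndependenceFree.convexHull_comp_iterate [CompactSpace Ω] [T2Space Ω] (hφ : Continuous φ)
    {x : C(Ω, ℝ)} (hfree : IndependenceFree fun n ω => x (φ^[n] ω)) :
    IndependenceFree fun g : convexHull ℝ (Set.range fun k => x.comp ⟨φ^[k], hφ.iterate k⟩) =>
      ⇑(g : C(Ω, ℝ)) :=
  IndependenceFree.convexHull_range (C := ‖x‖) hfree fun k =>
    (ContinuousMap.norm_le _ (norm_nonneg x)).2 fun ω => x.norm_coe_le_norm (φ^[k] ω)

end Topological

variable {Ω : Type*} [TopologicalSpace Ω] [MeasurableSpace Ω]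

theorem integral_comp_iterate [OpensMeasurableSpace Ω] {φ : Ω → Ω} {μ : Measure Ω}
    (hμ : MeasurePreserving φ μ μ) (x : C(Ω, ℝ)) (n : ℕ) :
    ∫ ω, x (φ^[n] ω) ∂μ = ∫ ω, x ω ∂μ := by
  have hn := hμ.iterate n
  rw [← integral_map hn.aemeasurable x.continuous.measurable.aestronglyMeasurable, hn.map_eq]

variable [CompactSpace Ω]

theorem integral_birkhoffAverage_comp_iterate [OpensMeasurableSpace Ω] {φ : Ω → Ω} {μ : Measure Ω}
    [IsFiniteMeasure μ] (hφ : Continuous φ) (hμ : MeasurePreserving φ μ μ) (x : C(Ω, ℝ)) {N : ℕ}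
    (hN : N ≠ 0) (n : ℕ) : ∫ ω, birkhoffAverage ℝ φ x N (φ^[n] ω) ∂μ = ∫ ω, x ω ∂μ := by
  have hint (k : ℕ) : Integrable (fun ω => x (φ^[k] ω)) μ :=
    (x.continuous.comp (hφ.iterate k)).integrable_of_hasCompactSupport (.of_compactSpace _)
  simp only [birkhoffAverage, birkhoffSum, ← Function.iterate_add_apply]
  rw [integral_smul, integral_finsetSum _ fun k _ => hint (k + n)]
  simp [integral_comp_iterate hμ, hN]

variable [TopologicalSpace.MetrizableSpace Ω] [BorelSpace Ω] {φ : Ω → Ω} {Y : Set Ω} {x : C(Ω, ℝ)}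
  {μ : ProbabilityMeasure Ω}

theorem eventually_measure_inter_lt_birkhoffAverage_pos (hφ : Continuous φ) (hY : IsClosed Y)
    (hYφ : Set.MapsTo φ Y Y) (hμ : μ ∈ invariantMeasures φ Y)
    (hmax : ∀ ν ∈ invariantMeasures φ Y, ∫ ω, x ω ∂(ν : Measure Ω) ≤ ∫ ω, x ω ∂(μ : Measure Ω))
    {S : Set Ω} (hS : MeasurableSet S) (hSpos : 0 < (μ : Measure Ω) S) {d : ℝ} (hd : 0 < d) :
    ∀ᶠ N in atTop, ∀ n, 0 < (μ : Measure Ω)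
      (S ∩ {ω | ∫ ω, x ω ∂(μ : Measure Ω) - d < birkhoffAverage ℝ φ x N (φ^[n] ω)}) := by
  set s := ∫ ω, x ω ∂(μ : Measure Ω)
  have hSd : 0 < d * (μ : Measure Ω).real S :=
    mul_pos hd (ENNReal.toReal_pos hSpos.ne' (measure_ne_top _ S))
  filter_upwards [eventually_ne_atTop 0, eventually_forall_birkhoffAverage_lt hφ hY hYφ
    (lt_add_of_pos_right s (half_pos hSd)) hmax] with N hN hlt n
  have hcont : Continuous fun ω => birkhoffAverage ℝ φ x N (φ^[n] ω) :=
    (continuous_birkhoffAverage hφ x N).comp (hφ.iterate n)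
  refine measure_inter_sub_lt_pos hS (hcont.integrable_of_hasCompactSupport (.of_compactSpace _))
    (half_pos hSd).le ?_ (integral_birkhoffAverage_comp_iterate hφ hμ.1 x hN n).ge
    (half_lt_self hSd)
  filter_upwards [measure_eq_zero_iff_ae_notMem.1 hμ.2] with ω hω
  exact (hlt _ (hYφ.iterate n (not_not.1 hω))).le

-- Otherwise the convex combinations `birkhoffAverage ℝ φ x N ∘ φ^[n]` of the `x ∘ φ^[k]` would
-- split simultaneously any finite number of open sets of positive measure.
theorem integral_le_of_eventually_measure_inter_birkhoffAverage_lt_pos (hφ : Continuous φ)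
    (hfree : IndependenceFree fun n ω => x (φ^[n] ω)) (hY : IsClosed Y) (hYφ : Set.MapsTo φ Y Y)
    (hμ : μ ∈ invariantMeasures φ Y)
    (hmax : ∀ ν ∈ invariantMeasures φ Y, ∫ ω, x ω ∂(ν : Measure Ω) ≤ ∫ ω, x ω ∂(μ : Measure Ω))
    {c : ℝ} (hlow : ∀ d > 0, ∀ F : Finset (Set Ω), (∀ S ∈ F, IsOpen S ∧ 0 < (μ : Measure Ω) S) →
      ∀ᶠ N in atTop, ∃ n, ∀ S ∈ F,
        0 < (μ : Measure Ω) (S ∩ {ω | birkhoffAverage ℝ φ x N (φ^[n] ω) < c + d})) :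
    ∫ ω, x ω ∂(μ : Measure Ω) ≤ c := by
  by_contra! hlt
  set s := ∫ ω, x ω ∂(μ : Measure Ω)
  obtain ⟨d, hd, hcds⟩ : ∃ d > 0, c + d < s - d := ⟨(s - c) / 3, by linarith, by linarith⟩
  obtain ⟨u, hu⟩ := exists_rosenthalIndependent_of_splitting
    (P := fun S => IsOpen S ∧ 0 < (μ : Measure Ω) S) (r := c + d) (s := s - d)
    (f := fun g : convexHull ℝ (Set.range fun k => x.comp ⟨φ^[k], hφ.iterate k⟩) =>
      ⇑(g : C(Ω, ℝ)))
    (S₀ := Set.univ) ⟨isOpen_univ, by simp⟩ (fun S hS => nonempty_of_measure_ne_zero hS.2.ne')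
    fun F hF => by
      have hhigh := (Finset.eventually_all F).2 fun S hS =>
        eventually_measure_inter_lt_birkhoffAverage_pos hφ hY hYφ hμ hmax (hF S hS).1.measurableSet
          (hF S hS).2 hd
      obtain ⟨N, hN, hhighN, n, hlowN⟩ :=
        ((eventually_ne_atTop 0).and (hhigh.and (hlow d hd F hF))).exists
      obtain ⟨g, hg, hgavg⟩ := exists_mem_convexHull_eq_birkhoffAverage hφ x hN n
      refine ⟨⟨g, hg⟩, fun S hS => ⟨⟨?_, ?_⟩, ⟨?_, ?_⟩⟩⟩
      · exact (hF S hS).1.inter (isOpen_lt continuous_const g.continuous)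
      · simpa only [hgavg] using hhighN S hS n
      · exact (hF S hS).1.inter (isOpen_lt g.continuous continuous_const)
      · simpa only [hgavg] using hlowN S hS
  exact hfree.convexHull_comp_iterate hφ u _ _ hcds hu

end Averages

section Orbits

variable {Ω : Type*} [TopologicalSpace Ω] {φ : Ω → Ω}

theorem mapsTo_orbitClosure (hφ : Continuous φ) (z : Ω) :
    Set.MapsTo φ (orbitClosure φ z) (orbitClosure φ z) := by
  refine Set.MapsTo.closure ?_ hφ
  rintro _ ⟨n, rfl⟩
  exact ⟨n + 1, Function.iterate_succ_apply' φ n z⟩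

theorem isClosed_orbitClosure (φ : Ω → Ω) (z : Ω) : IsClosed (orbitClosure φ z) :=
  isClosed_closure

theorem iterate_mem_orbitClosure (φ : Ω → Ω) (n : ℕ) (z : Ω) : φ^[n] z ∈ orbitClosure φ z :=
  subset_closure ⟨n, rfl⟩

theorem orbitClosure_subset {Y : Set Ω} (hY : IsClosed Y) (hYφ : Set.MapsTo φ Y Y) {z : Ω}
    (hz : z ∈ Y) : orbitClosure φ z ⊆ Y := by
  refine closure_minimal ?_ hY
  rintro _ ⟨n, rfl⟩
  exact hYφ.iterate n hz

theorem IsMinimalSet.orbitClosure_eq (hφ : Continuous φ) {m : Set Ω} (hm : IsMinimalSet φ m)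
    {z : Ω} (hz : z ∈ m) : orbitClosure φ z = m := by
  obtain ⟨-, hclosed, hmaps, hmin⟩ := hm
  exact hmin _ (orbitClosure_subset hclosed hmaps hz) ⟨z, iterate_mem_orbitClosure φ 0 z⟩
    (isClosed_orbitClosure φ z) (mapsTo_orbitClosure hφ z)

theorem exists_iterate_mem_of_mem_orbitClosure {y z : Ω} (hy : y ∈ orbitClosure φ z) {W : Set Ω}
    (hW : IsOpen W) (hyW : y ∈ W) : ∃ n, φ^[n] z ∈ W := by
  obtain ⟨_, hzW, n, rfl⟩ := mem_closure_iff.1 hy W hW hyW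
  exact ⟨n, hzW⟩

theorem exists_forall_exists_le_iterate_mem (hφ : Continuous φ) {Y : Set Ω} (hY : IsCompact Y)
    {W : Set Ω} (hW : IsOpen W) (h : ∀ z ∈ Y, ∃ n, φ^[n] z ∈ W) :
    ∃ L, ∀ z ∈ Y, ∃ l ≤ L, φ^[l] z ∈ W := by
  obtain ⟨t, ht⟩ := hY.elim_finite_subcover (fun n => φ^[n] ⁻¹' W)
    (fun n => hW.preimage (hφ.iterate n)) fun z hz => Set.mem_iUnion.2 (h z hz)
  refine ⟨t.sup id, fun z hz => ?_⟩
  obtain ⟨l, hl, hlW⟩ := Set.mem_iUnion₂.1 (ht hz)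
  exact ⟨l, Finset.le_sup (f := id) hl, hlW⟩

-- The time at which a further point enters `W` is bounded, so it is enough that the other points
-- have been moved into an open set that remains in `W` for that long.
theorem exists_forall_iterate_mem (hφ : Continuous φ) {Y m : Set Ω} (hY : IsCompact Y)
    (hYφ : Set.MapsTo φ Y Y) (hm : m.Nonempty) (hmφ : Set.MapsTo φ m m)
    (hYm : ∀ z ∈ Y, m ⊆ orbitClosure φ z) {F : Finset Ω} (hF : ∀ z ∈ F, z ∈ Y) {W : Set Ω}
    (hW : IsOpen W) (hmW : m ⊆ W) : ∃ n, ∀ z ∈ F, φ^[n] z ∈ W := by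
  classical
  induction F using Finset.induction_on generalizing W with
  | empty => exact ⟨0, by simp⟩
  | insert a F _ ih =>
    obtain ⟨y, hy⟩ := hm
    obtain ⟨L, hL⟩ := exists_forall_exists_le_iterate_mem hφ hY hW fun z hz =>
      exists_iterate_mem_of_mem_orbitClosure (hYm z hz hy) hW (hmW hy)
    obtain ⟨n, hn⟩ := ih (W := ⋂ l ∈ Finset.range (L + 1), φ^[l] ⁻¹' W)
      (fun z hz => hF z (Finset.mem_insert_of_mem hz))
      (isOpen_biInter_finset fun l _ => hW.preimage (hφ.iterate l))
      (Set.subset_iInter₂ fun l _ z hz => hmW (hmφ.iterate l hz))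
    obtain ⟨l, hl, hlW⟩ := hL (φ^[n] a) (hYφ.iterate n (hF a (Finset.mem_insert_self a F)))
    refine ⟨l + n, fun z hz => ?_⟩
    rw [Function.iterate_add_apply]
    obtain rfl | hzF := Finset.mem_insert.1 hz
    · exact hlW
    · exact Set.mem_iInter₂.1 (hn z hzF) l (Finset.mem_range.2 (Nat.lt_succ_of_le hl))

theorem IsMinimalSet.subset_orbitClosure_of_existsUnique (hφ : Continuous φ)
    (hmin : ∀ ω : Ω, ∃! m : Set Ω, IsMinimalSet φ m ∧ m ⊆ orbitClosure φ ω) {m : Set Ω}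
    (hm : IsMinimalSet φ m) {ω z : Ω} (hmω : m ⊆ orbitClosure φ ω) (hz : z ∈ orbitClosure φ ω) :
    m ⊆ orbitClosure φ z := by
  obtain ⟨m', ⟨hm', hm'z⟩, -⟩ := hmin z
  have hzω := orbitClosure_subset (isClosed_orbitClosure φ ω) (mapsTo_orbitClosure hφ ω) hz
  exact (hmin ω).unique ⟨hm, hmω⟩ ⟨hm', hm'z.trans hzω⟩ ▸ hm'z

end Orbits

section UniqueErgodicity

variable {Ω : Type*} [TopologicalSpace Ω] [MeasurableSpace Ω] [BorelSpace Ω] {φ : Ω → Ω}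
  {m Y : Set Ω}

theorem IsMinimalSet.measure_pos_of_isOpen (hφ : Continuous φ) (hm : IsMinimalSet φ m)
    {μ : ProbabilityMeasure Ω} (hμ : μ ∈ invariantMeasures φ m) {W : Set Ω} (hW : IsOpen W)
    (hmW : (m ∩ W).Nonempty) : 0 < (μ : Measure Ω) W := by
  by_contra! hzero
  obtain ⟨y, hy, hyW⟩ := hmW
  have hcover : m ⊆ ⋃ n, φ^[n] ⁻¹' W := fun z hz => Set.mem_iUnion.2 <|
    exists_iterate_mem_of_mem_orbitClosure ((hm.orbitClosure_eq hφ hz).symm ▸ hy) hW hyW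
  have hnull : (μ : Measure Ω) m = 0 := measure_mono_null hcover <| measure_iUnion_null fun n => by
    rw [(hμ.1.iterate n).measure_preimage hW.measurableSet.nullMeasurableSet]
    exact le_zero_iff.1 hzero
  exact zero_ne_one (hnull.symm.trans ((prob_compl_eq_zero_iff hm.2.1.measurableSet).1 hμ.2))

variable [TopologicalSpace.MetrizableSpace Ω]

theorem eq_of_forall_integral_le {μ ν : ProbabilityMeasure Ω}
    (h : ∀ x : C(Ω, ℝ), ∫ ω, x ω ∂(μ : Measure Ω) ≤ ∫ ω, x ω ∂(ν : Measure Ω)) : μ = ν := by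
  refine Subtype.ext (ext_of_forall_integral_eq_of_IsFiniteMeasure
    (μ := (μ : Measure Ω)) (ν := (ν : Measure Ω)) fun f => (h f.toContinuousMap).antisymm ?_)
  have hneg := h (-f.toContinuousMap)
  simp only [ContinuousMap.neg_apply, integral_neg, neg_le_neg_iff] at hneg
  exact hneg

variable [CompactSpace Ω]

theorem IsMinimalSet.integral_le_integral (hφ : Continuous φ) (hm : IsMinimalSet φ m)
    {x : C(Ω, ℝ)} (hfree : IndependenceFree fun n ω => x (φ^[n] ω)) {μ ν : ProbabilityMeasure Ω}
    (hμ : μ ∈ invariantMeasures φ m) (hν : ν ∈ invariantMeasures φ m) :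
    ∫ ω, x ω ∂(μ : Measure Ω) ≤ ∫ ω, x ω ∂(ν : Measure Ω) := by
  obtain ⟨-, hclosed, hmaps, -⟩ := id hm
  obtain ⟨μ', hμ', hmax⟩ := exists_mem_invariantMeasures_isMaxOn_integral hφ hclosed ⟨μ, hμ⟩ x
  obtain ⟨ν', hν', hmin⟩ := exists_mem_invariantMeasures_isMaxOn_integral hφ hclosed ⟨μ, hμ⟩ (-x)
  refine (hmax μ hμ).trans (le_trans ?_ (by simpa [integral_neg] using hmin ν hν))
  refine integral_le_of_eventually_measure_inter_birkhoffAverage_lt_pos hφ hfree hclosed hmaps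
    hμ' hmax fun d hd F hF => ?_
  have hpos {W : Set Ω} (hW : IsOpen W) {ρ τ : ProbabilityMeasure Ω}
      (hρ : ρ ∈ invariantMeasures φ m) (hτ : τ ∈ invariantMeasures φ m)
      (hρW : 0 < (ρ : Measure Ω) W) : 0 < (τ : Measure Ω) W := by
    refine hm.measure_pos_of_isOpen hφ hτ hW (Set.nonempty_iff_ne_empty.2 fun h => hρW.ne' ?_)
    exact measure_mono_null (Set.disjoint_iff_inter_eq_empty.2 h).subset_compl_left hρ.2
  have hneg := (Finset.eventually_all F).2 fun S hS =>
    eventually_measure_inter_lt_birkhoffAverage_pos hφ hclosed hmaps hν' hmin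
      (hF S hS).1.measurableSet (hpos (hF S hS).1 hμ' hν' (hF S hS).2) hd
  filter_upwards [hneg] with N hN
  refine ⟨0, fun S hS => hpos ?_ hν' hμ' ?_⟩
  · exact (hF S hS).1.inter (isOpen_lt (continuous_birkhoffAverage hφ x N) continuous_const)
  · refine (hN S hS 0).trans_le (measure_mono (Set.inter_subset_inter_right S fun ω hω => ?_))
    simp only [ContinuousMap.coe_neg, Pi.neg_apply, birkhoffAverage_neg, integral_neg,
      Set.mem_ofPred_eq, Function.iterate_zero_apply] at hω ⊢
    linarith

theorem integral_le_of_subset_orbitClosure (hφ : Continuous φ) (hY : IsClosed Y)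
    (hYφ : Set.MapsTo φ Y Y) (hm : m.Nonempty) (hmclosed : IsClosed m) (hmφ : Set.MapsTo φ m m)
    (hYm : ∀ z ∈ Y, m ⊆ orbitClosure φ z) {x : C(Ω, ℝ)}
    (hfree : IndependenceFree fun n ω => x (φ^[n] ω)) {c : ℝ}
    (hc : ∀ ν ∈ invariantMeasures φ m, ∫ ω, x ω ∂(ν : Measure Ω) ≤ c) {μ : ProbabilityMeasure Ω}
    (hμ : μ ∈ invariantMeasures φ Y) : ∫ ω, x ω ∂(μ : Measure Ω) ≤ c := by
  obtain ⟨μ', hμ', hmax⟩ := exists_mem_invariantMeasures_isMaxOn_integral hφ hY ⟨μ, hμ⟩ x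
  refine (hmax μ hμ).trans ?_
  refine integral_le_of_eventually_measure_inter_birkhoffAverage_lt_pos hφ hfree hY hYφ
    hμ' hmax fun d hd F hF => ?_
  have hsupport (S : F) : ∃ z ∈ S.1 ∩ Y, ∀ t ∈ 𝓝[S.1 ∩ Y] z, 0 < (μ' : Measure Ω) t := by
    refine exists_mem_forall_mem_nhdsWithin_pos_measure ?_
    rw [measure_inter_conull hμ'.2]
    exact (hF S S.2).2.ne'
  choose z hzS hz using hsupport
  classical
  filter_upwards [eventually_forall_birkhoffAverage_lt hφ hmclosed hmφ (lt_add_of_pos_right c hd)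
    hc] with N hN
  set W := {ω | birkhoffAverage ℝ φ x N ω < c + d}
  have hW : IsOpen W := isOpen_lt (continuous_birkhoffAverage hφ x N) continuous_const
  obtain ⟨n, hn⟩ := exists_forall_iterate_mem hφ hY.isCompact hYφ hm hmφ hYm
    (F := Finset.univ.image z) (Finset.forall_mem_image.2 fun S _ => (hzS S).2) hW hN
  refine ⟨n, fun S hS => hz ⟨S, hS⟩ _ (mem_nhdsWithin_of_mem_nhds ?_)⟩
  have hnW : φ^[n] (z ⟨S, hS⟩) ∈ W := hn _ (Finset.mem_image_of_mem z (Finset.mem_univ _))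
  exact ((hF S hS).1.inter (hW.preimage (hφ.iterate n))).mem_nhds ⟨(hzS ⟨S, hS⟩).1, hnW⟩

theorem IsMinimalSet.eq_of_mem_invariantMeasures (hφ : Continuous φ) (hm : IsMinimalSet φ m)
    (hfree : ∀ x : C(Ω, ℝ), IndependenceFree fun n ω => x (φ^[n] ω)) (hY : IsClosed Y)
    (hYφ : Set.MapsTo φ Y Y) (hYm : ∀ z ∈ Y, m ⊆ orbitClosure φ z) {μ ν : ProbabilityMeasure Ω}
    (hμ : μ ∈ invariantMeasures φ Y) (hν : ν ∈ invariantMeasures φ m) : μ = ν :=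
  eq_of_forall_integral_le fun x =>
    integral_le_of_subset_orbitClosure hφ hY hYφ hm.1 hm.2.1 hm.2.2.1 hYm (hfree x)
      (fun _ hν' => hm.integral_le_integral hφ (hfree x) hν' hν) hμ

theorem exists_isMinimalSet_invariantMeasures_orbitClosure (hφ : Continuous φ)
    (hmin : ∀ ω : Ω, ∃! m : Set Ω, IsMinimalSet φ m ∧ m ⊆ orbitClosure φ ω)
    (hfree : ∀ x : C(Ω, ℝ), IndependenceFree fun n ω => x (φ^[n] ω)) (ω : Ω) :
    ∃ m ⊆ orbitClosure φ ω, IsMinimalSet φ m ∧ ∃ ν ∈ invariantMeasures φ m,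
      invariantMeasures φ (orbitClosure φ ω) = {ν} := by
  obtain ⟨m, ⟨hm, hmω⟩, -⟩ := hmin ω
  obtain ⟨ν, hν⟩ := invariantMeasures_nonempty hφ hm.2.1 hm.2.2.1 hm.1
  refine ⟨m, hmω, hm, ν, hν, Set.eq_singleton_iff_unique_mem.2
    ⟨⟨hν.1, measure_mono_null (Set.compl_subset_compl.2 hmω) hν.2⟩, fun μ hμ => ?_⟩⟩
  exact hm.eq_of_mem_invariantMeasures hφ hfree (isClosed_orbitClosure φ ω)
    (mapsTo_orbitClosure hφ ω)
    (fun _ hz => hm.subset_orbitClosure_of_existsUnique hφ hmin hmω hz) hμ hν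

end UniqueErgodicity

section ErgodicMeasures

section Recurrence

variable {Ω : Type*} [MeasurableSpace Ω] {φ : Ω → Ω} {μ : Measure Ω}

theorem IsErgodicMeasure.ergodic (hφ : Measurable φ) (hμ : IsErgodicMeasure φ μ) :
    Ergodic φ μ where
  measurable := hφ
  map_eq := Measure.ext fun e he => by rw [Measure.map_apply hφ he, hμ.2.1 e he]
  aeconst_set e he heφ := by
    have := hμ.1
    rw [eventuallyConst_set']
    exact (hμ.2.2 e he heφ).imp ae_eq_empty.2 fun h =>
      ae_eq_univ.2 ((prob_compl_eq_zero_iff he).2 h)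

theorem ae_exists_iterate_mem_of_ergodic [IsFiniteMeasure μ] (hφ : Ergodic φ μ) {W : Set Ω}
    (hW : MeasurableSet W) (hμW : μ W ≠ 0) : ∀ᵐ ω ∂μ, ∃ n, φ^[n] ω ∈ W := by
  have hsub : φ ⁻¹' (⋃ n, φ^[n] ⁻¹' W) ⊆ ⋃ n, φ^[n] ⁻¹' W := by
    rw [Set.preimage_iUnion]
    exact Set.iUnion_subset fun n => Set.subset_iUnion_of_subset (n + 1) subset_rfl
  obtain hempty | huniv := hφ.ae_empty_or_univ_of_preimage_ae_le
    (MeasurableSet.iUnion fun n => hφ.measurable.iterate n hW).nullMeasurableSet hsub.eventuallyLE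
  · exact absurd (measure_mono_null (Set.subset_iUnion_of_subset 0 subset_rfl)
      (ae_eq_empty.1 hempty)) hμW
  · filter_upwards [eventuallyEq_univ.1 huniv] with ω hω using Set.mem_iUnion.1 hω

end Recurrence

variable {Ω : Type*} [TopologicalSpace Ω] [MeasurableSpace Ω] {φ : Ω → Ω} {μ : Measure Ω}

theorem msupp_eq_support (μ : Measure Ω) : msupp μ = μ.support :=
  Measure.support_eq_sInter.symm

theorem mapsTo_support [HereditarilyLindelofSpace Ω] (hφ : Continuous φ)
    (hμ : MeasurePreserving φ μ μ) : Set.MapsTo φ μ.support μ.support :=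
  Measure.support_subset_of_isClosed (Measure.isClosed_support.preimage hφ)
    (hμ.quasiMeasurePreserving.ae Measure.support_mem_ae)

theorem exists_orbitClosure_eq_support [SecondCountableTopology Ω] [OpensMeasurableSpace Ω]
    [IsProbabilityMeasure μ] (hφ : Continuous φ) (hμ : Ergodic φ μ) :
    ∃ ω, orbitClosure φ ω = μ.support := by
  have hhit : ∀ᵐ ω ∂μ, ∀ W ∈ TopologicalSpace.countableBasis Ω, μ W ≠ 0 → ∃ n, φ^[n] ω ∈ W :=
    (ae_ball_iff (TopologicalSpace.countable_countableBasis Ω)).2 fun W hW => by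
      by_cases hμW : μ W = 0
      · exact .of_forall fun ω h => absurd hμW h
      · filter_upwards [ae_exists_iterate_mem_of_ergodic hμ
          (TopologicalSpace.isOpen_of_mem_countableBasis hW).measurableSet hμW] with ω hω _ using hω
  have hsupport : ∀ᵐ ω ∂μ, ω ∈ μ.support := Measure.support_mem_ae
  obtain ⟨ω, hω, hhitω⟩ := (hsupport.and hhit).exists
  refine ⟨ω, (orbitClosure_subset Measure.isClosed_support
    (mapsTo_support hφ hμ.toMeasurePreserving) hω).antisymm fun z hz => ?_⟩
  refine (TopologicalSpace.isBasis_countableBasis Ω).mem_closure_iff.2 fun W hW hzW => ?_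
  have hWz : W ∈ 𝓝 z := (TopologicalSpace.isOpen_of_mem_countableBasis hW).mem_nhds hzW
  obtain ⟨n, hn⟩ := hhitω W hW ((Measure.mem_support_iff_forall z).1 hz W hWz).ne'
  exact ⟨_, hn, n, rfl⟩

theorem IsErgodicMeasure.isMinimalSet_msupp [TopologicalSpace.MetrizableSpace Ω] [CompactSpace Ω]
    [BorelSpace Ω] (hφ : Continuous φ)
    (hmin : ∀ ω : Ω, ∃! m : Set Ω, IsMinimalSet φ m ∧ m ⊆ orbitClosure φ ω)
    (hfree : ∀ x : C(Ω, ℝ), IndependenceFree fun n ω => x (φ^[n] ω))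
    (hμ : IsErgodicMeasure φ μ) : IsMinimalSet φ (msupp μ) := by
  have := hμ.1
  have herg := hμ.ergodic hφ.measurable
  rw [msupp_eq_support]
  obtain ⟨ω, hω⟩ := exists_orbitClosure_eq_support hφ herg
  obtain ⟨m, hmω, hm, ν, hν, hsingle⟩ :=
    exists_isMinimalSet_invariantMeasures_orbitClosure hφ hmin hfree ω
  rw [hω] at hmω hsingle
  obtain rfl : ⟨μ, hμ.1⟩ = ν := hsingle.subset
    (show ⟨μ, hμ.1⟩ ∈ invariantMeasures φ μ.support from
      ⟨herg.toMeasurePreserving, Measure.measure_compl_support⟩)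
  rwa [← hmω.antisymm (Measure.support_subset_of_isClosed hm.2.1 hν.2)]

end ErgodicMeasures

section SignedMeasures

theorem Vop_iterate_toSignedMeasure_sub {Ω : Type*} [MeasurableSpace Ω] {φ : Ω → Ω}
    (hφ : Measurable φ) (n : ℕ) (ν₁ ν₂ : Measure Ω) [IsFiniteMeasure ν₁] [IsFiniteMeasure ν₂] :
    (Vop φ)^[n] (ν₁.toSignedMeasure - ν₂.toSignedMeasure) =
      (ν₁.map φ^[n]).toSignedMeasure - (ν₂.map φ^[n]).toSignedMeasure := by
  induction n with
  | zero => simp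
  | succ n ih =>
    rw [Function.iterate_succ_apply', ih]
    ext e he
    simp only [Vop, VectorMeasure.map_apply _ hφ he, Measure.toSignedMeasure_sub_apply (hφ he),
      Measure.toSignedMeasure_sub_apply he, map_measureReal_apply (hφ.iterate n) (hφ he),
      map_measureReal_apply (hφ.iterate (n + 1)) he, Set.preimage_preimage,
      ← Function.iterate_succ_apply']

theorem toSignedMeasure_posPart_sub_negPart {Ω : Type*} [MeasurableSpace Ω] (μ : SignedMeasure Ω) :
    μ.toJordanDecomposition.posPart.toSignedMeasure -
      μ.toJordanDecomposition.negPart.toSignedMeasure = μ :=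
  SignedMeasure.toSignedMeasure_toJordanDecomposition μ

theorem spair_smul {Ω : Type*} [MeasurableSpace Ω] (f : Ω → ℝ) (a : NNReal) (μ : SignedMeasure Ω) :
    spair f (a • μ) = a * spair f μ := by
  rw [spair, spair, SignedMeasure.toJordanDecomposition_smul]
  simp only [JordanDecomposition.smul_posPart, JordanDecomposition.smul_negPart,
    integral_smul_nnreal_measure, NNReal.smul_def, smul_eq_mul, mul_sub]

variable {Ω : Type*} [TopologicalSpace Ω] [CompactSpace Ω] [MeasurableSpace Ω]
  [OpensMeasurableSpace Ω]

theorem integrable_of_compactSpace (μ : Measure Ω) [IsFiniteMeasureOnCompacts μ] (x : C(Ω, ℝ)) :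
    Integrable x μ :=
  x.continuous.integrable_of_hasCompactSupport (.of_compactSpace _)

theorem spair_toSignedMeasure_sub (x : C(Ω, ℝ)) (ν₁ ν₂ : Measure Ω) [IsFiniteMeasure ν₁]
    [IsFiniteMeasure ν₂] :
    spair x (ν₁.toSignedMeasure - ν₂.toSignedMeasure) = ∫ ω, x ω ∂ν₁ - ∫ ω, x ω ∂ν₂ := by
  set μ := ν₁.toSignedMeasure - ν₂.toSignedMeasure with hμ
  have hparts : μ.toJordanDecomposition.posPart + ν₂ = ν₁ + μ.toJordanDecomposition.negPart := by
    rw [← Measure.toSignedMeasure_eq_toSignedMeasure_iff, Measure.toSignedMeasure_add,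
      Measure.toSignedMeasure_add]
    exact sub_eq_sub_iff_add_eq_add.1 ((toSignedMeasure_posPart_sub_negPart μ).trans hμ)
  have hint := congrArg (fun ν => ∫ ω, x ω ∂ν) hparts
  simp only [integral_add_measure (integrable_of_compactSpace _ x)
    (integrable_of_compactSpace _ x)] at hint
  rw [spair, sub_eq_sub_iff_add_eq_add, hint]

theorem spair_add (x : C(Ω, ℝ)) (μ ν : SignedMeasure Ω) :
    spair x (μ + ν) = spair x μ + spair x ν := by
  have hsum : μ + ν =
      (μ.toJordanDecomposition.posPart + ν.toJordanDecomposition.posPart).toSignedMeasure -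
        (μ.toJordanDecomposition.negPart + ν.toJordanDecomposition.negPart).toSignedMeasure := by
    simp only [Measure.toSignedMeasure_add, add_sub_add_comm, toSignedMeasure_posPart_sub_negPart]
  rw [hsum, spair_toSignedMeasure_sub]
  simp only [integral_add_measure (integrable_of_compactSpace _ x)
    (integrable_of_compactSpace _ x), spair, add_sub_add_comm]

end SignedMeasures

section RandomIterates

variable {Ω : Type*} [MeasurableSpace Ω]

/-- The law of `φ^[n] ω`, where the time `n` and the point `ω` are independent and distributed
according to `p` and `ν`. -/
noncomputable def randomIterate (φ : Ω → Ω) (p : Measure ℕ) (ν : Measure Ω) : Measure Ω :=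
  (ν.prod p).map fun q => φ^[q.2] q.1

variable {φ : Ω → Ω}

theorem measurable_uncurry_iterate (hφ : Measurable φ) :
    Measurable fun q : Ω × ℕ => φ^[q.2] q.1 :=
  measurable_from_prod_countable_left fun n => hφ.iterate n

instance (p : Measure ℕ) (ν : Measure Ω) [IsFiniteMeasure p] [IsFiniteMeasure ν] :
    IsFiniteMeasure (randomIterate φ p ν) :=
  inferInstanceAs (IsFiniteMeasure (Measure.map _ _))

theorem randomIterate_apply_univ (hφ : Measurable φ) (p : Measure ℕ) [IsProbabilityMeasure p]
    (ν : Measure Ω) [SFinite ν] : randomIterate φ p ν Set.univ = ν Set.univ := by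
  rw [randomIterate, Measure.map_apply (measurable_uncurry_iterate hφ) .univ, Set.preimage_univ,
    ← Set.univ_prod_univ, Measure.prod_prod, measure_univ (μ := p), mul_one]

theorem randomIterate_dirac_time (hφ : Measurable φ) (n : ℕ) (ν : Measure Ω) [SFinite ν] :
    randomIterate φ (Measure.dirac n) ν = ν.map φ^[n] := by
  rw [randomIterate, Measure.prod_dirac,
    Measure.map_map (measurable_uncurry_iterate hφ) measurable_prodMk_right]
  rfl

theorem randomIterate_dirac (hφ : Measurable φ) (p : Measure ℕ) [SFinite p] (ω : Ω) :
    randomIterate φ p (Measure.dirac ω) = p.map fun n => φ^[n] ω := by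
  rw [randomIterate, Measure.dirac_prod,
    Measure.map_map (measurable_uncurry_iterate hφ) measurable_prodMk_left]
  rfl

theorem randomIterate_dirac_map (hφ : Measurable φ) (p : Measure ℕ) [SFinite p] (ω : Ω) :
    randomIterate φ p (Measure.dirac (φ ω)) = (randomIterate φ p (Measure.dirac ω)).map φ := by
  rw [randomIterate_dirac hφ, randomIterate_dirac hφ,
    Measure.map_map hφ (measurable_of_countable _)]
  simp only [Function.comp_def, ← Function.iterate_succ_apply', Function.iterate_succ_apply]

theorem randomIterate_dirac_compl_orbitClosure [TopologicalSpace Ω] [OpensMeasurableSpace Ω]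
    (hφ : Measurable φ) (p : Measure ℕ) [SFinite p] (ω : Ω) :
    randomIterate φ p (Measure.dirac ω) (orbitClosure φ ω)ᶜ = 0 := by
  rw [randomIterate_dirac hφ, Measure.map_apply (measurable_of_countable _)
    (isClosed_orbitClosure φ ω).measurableSet.compl]
  convert measure_empty (μ := p)
  exact Set.eq_empty_of_forall_notMem fun n hn => hn (iterate_mem_orbitClosure φ n ω)

theorem randomIterate_smul_add_smul (hφ : Measurable φ) (a b : NNReal) (p q : Measure ℕ) [SFinite p]
    [SFinite q] (ν : Measure Ω) [SFinite ν] :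
    randomIterate φ (a • p + b • q) ν = a • randomIterate φ p ν + b • randomIterate φ q ν := by
  simp only [randomIterate, Measure.prod_add, Measure.prod_smul_right,
    Measure.map_add _ _ (measurable_uncurry_iterate hφ), Measure.map_smul]

/-- The operator `T` on signed measures is induced by random iteration with time law `p`. Since a
signed measure has many representations `ν₁ - ν₂` by finite measures, asking for all of them avoids
singling out the Jordan decomposition. -/
def IsRandomIterateOperator [TopologicalSpace Ω] (φ : Ω → Ω) (p : Measure ℕ)
    (T : SignedMeasure Ω → SignedMeasure Ω) : Prop :=
  ∀ (x : C(Ω, ℝ)) (ν₁ ν₂ : Measure Ω) [IsFiniteMeasure ν₁] [IsFiniteMeasure ν₂],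
    spair x (T (ν₁.toSignedMeasure - ν₂.toSignedMeasure)) =
      ∫ ω, x ω ∂randomIterate φ p ν₁ - ∫ ω, x ω ∂randomIterate φ p ν₂

theorem IsRandomIterateOperator.spair_toSignedMeasure [TopologicalSpace Ω] {p : Measure ℕ}
    {T : SignedMeasure Ω → SignedMeasure Ω} (hT : IsRandomIterateOperator φ p T) (x : C(Ω, ℝ))
    (ν : Measure Ω) [IsFiniteMeasure ν] :
    spair x (T ν.toSignedMeasure) = ∫ ω, x ω ∂randomIterate φ p ν := by
  simpa only [Measure.toSignedMeasure_zero, sub_zero, randomIterate, Measure.zero_prod,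
    Measure.map_zero, integral_zero_measure] using hT x ν 0

variable [TopologicalSpace Ω] [OpensMeasurableSpace Ω]

theorem integral_randomIterate_dirac (hφ : Measurable φ) (p : Measure ℕ) [SFinite p] (ω : Ω)
    (x : C(Ω, ℝ)) :
    ∫ ω', x ω' ∂randomIterate φ p (Measure.dirac ω) = ∫ n, x (φ^[n] ω) ∂p := by
  rw [randomIterate_dirac hφ, integral_map (measurable_of_countable _).aemeasurable
    x.continuous.measurable.aestronglyMeasurable]

variable [CompactSpace Ω]

theorem integrable_comp_iterate_prod (hφ : Measurable φ) (p : Measure ℕ) [IsFiniteMeasure p]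
    (ν : Measure Ω) [IsFiniteMeasure ν] (x : C(Ω, ℝ)) :
    Integrable (fun q : Ω × ℕ => x (φ^[q.2] q.1)) (ν.prod p) :=
  (integrable_of_compactSpace (randomIterate φ p ν) x).comp_measurable
    (measurable_uncurry_iterate hφ)

theorem integral_randomIterate (hφ : Measurable φ) (p : Measure ℕ) [IsFiniteMeasure p]
    (ν : Measure Ω) [IsFiniteMeasure ν] (x : C(Ω, ℝ)) :
    ∫ ω, x ω ∂randomIterate φ p ν = ∫ ω, ∫ n, x (φ^[n] ω) ∂p ∂ν := by
  rw [← integral_prod _ (integrable_comp_iterate_prod hφ p ν x)]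
  exact integral_map (measurable_uncurry_iterate hφ).aemeasurable
    (integrable_of_compactSpace (randomIterate φ p ν) x).aestronglyMeasurable

theorem tendsto_integral_randomIterate (hφ : Measurable φ) {p : ℕ → Measure ℕ}
    [∀ k, IsProbabilityMeasure (p k)] {x : C(Ω, ℝ)} {L : Ω → ℝ}
    (hL : ∀ ω, Tendsto (fun k => ∫ ω', x ω' ∂randomIterate φ (p k) (Measure.dirac ω)) atTop
      (𝓝 (L ω))) (ν : Measure Ω) [IsFiniteMeasure ν] :
    Tendsto (fun k => ∫ ω, x ω ∂randomIterate φ (p k) ν) atTop (𝓝 (∫ ω, L ω ∂ν)) := by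
  simp only [integral_randomIterate_dirac hφ] at hL
  simp only [integral_randomIterate hφ]
  refine tendsto_integral_of_dominated_convergence (fun _ => ‖x‖)
    (fun k => (integrable_comp_iterate_prod hφ (p k) ν x).integral_prod_left.aestronglyMeasurable)
    (integrable_const _) (fun k => .of_forall fun ω => ?_) (.of_forall hL)
  refine (norm_integral_le_of_norm_le_const (.of_forall fun n => x.norm_coe_le_norm _)).trans ?_
  rw [probReal_univ, mul_one]

theorem isRandomIterateOperator_Vop_iterate (hφ : Measurable φ) (n : ℕ) :
    IsRandomIterateOperator φ (Measure.dirac n) (Vop φ)^[n] := by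
  intro x ν₁ ν₂ _ _
  rw [Vop_iterate_toSignedMeasure_sub hφ, spair_toSignedMeasure_sub, randomIterate_dirac_time hφ,
    randomIterate_dirac_time hφ]

theorem IsRandomIterateOperator.smul_add_smul (hφ : Measurable φ) {p q : Measure ℕ}
    [IsFiniteMeasure p] [IsFiniteMeasure q] {T₁ T₂ : SignedMeasure Ω → SignedMeasure Ω}
    (hT₁ : IsRandomIterateOperator φ p T₁) (hT₂ : IsRandomIterateOperator φ q T₂) (a b : NNReal) :
    IsRandomIterateOperator φ (a • p + b • q) (a • T₁ + b • T₂) := by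
  intro x ν₁ ν₂ _ _
  have hx (ν : Measure Ω) [IsFiniteMeasure ν] : Integrable x ν := integrable_of_compactSpace ν x
  rw [Pi.add_apply, Pi.smul_apply, Pi.smul_apply, spair_add, spair_smul, spair_smul, hT₁, hT₂,
    randomIterate_smul_add_smul hφ, randomIterate_smul_add_smul hφ,
    integral_add_measure (hx _) (hx _), integral_add_measure (hx _) (hx _)]
  simp only [integral_smul_nnreal_measure, NNReal.smul_def, smul_eq_mul]
  ring

theorem exists_isRandomIterateOperator_of_mem_convexHull (hφ : Measurable φ)
    {T : SignedMeasure Ω → SignedMeasure Ω}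
    (hT : T ∈ convexHull ℝ (Set.range fun n : ℕ => (Vop φ)^[n])) :
    ∃ p : Measure ℕ, IsProbabilityMeasure p ∧ IsRandomIterateOperator φ p T := by
  refine convexHull_min (t := {T | ∃ p, IsProbabilityMeasure p ∧ IsRandomIterateOperator φ p T})
    (Set.range_subset_iff.2 fun n =>
      ⟨_, inferInstance, isRandomIterateOperator_Vop_iterate hφ n⟩) ?_ hT
  rintro T₁ ⟨p, hp, hT₁⟩ T₂ ⟨q, hq, hT₂⟩ a b ha hb hab
  lift a to NNReal using ha
  lift b to NNReal using hb
  refine ⟨a • p + b • q, ⟨?_⟩, hT₁.smul_add_smul hφ hT₂ a b⟩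
  simp only [Measure.add_apply, Measure.smul_apply, measure_univ, ENNReal.smul_def, smul_eq_mul,
    mul_one]
  exact_mod_cast hab

end RandomIterates

section WeakLimits

variable {Ω ι : Type*} [TopologicalSpace Ω] [MeasurableSpace Ω] [CompactSpace Ω] [BorelSpace Ω]
  {l : Filter ι}

theorem exists_isFiniteMeasure_forall_integral_eq [T2Space Ω] [l.NeBot] {μ : ι → Measure Ω}
    {C : NNReal} (hC : ∀ i, μ i Set.univ ≤ C) {L : C(Ω, ℝ) → ℝ}
    (hL : ∀ x : C(Ω, ℝ), Tendsto (fun i => ∫ ω, x ω ∂μ i) l (𝓝 (L x))) :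
    ∃ ν : Measure Ω, IsFiniteMeasure ν ∧ ∀ x : C(Ω, ℝ), ∫ ω, x ω ∂ν = L x := by
  let m (i : ι) : FiniteMeasure Ω := ⟨μ i, ⟨(hC i).trans_lt ENNReal.coe_lt_top⟩⟩
  have hm (i : ι) : (m i).mass ≤ C :=
    ENNReal.coe_le_coe.1 ((m i).ennreal_mass.trans_le (hC i))
  let U := Ultrafilter.of l
  obtain ⟨ν, -, hν⟩ :=
    (isCompact_setOfPred_finiteMeasure_le_of_compactSpace Ω C).ultrafilter_le_nhds (U.map m)
      (le_principal_iff.2 (Filter.mem_map.2 (Filter.univ_mem' hm)))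
  refine ⟨ν, inferInstance, fun x =>
    tendsto_nhds_unique ?_ ((hL x).mono_left (Ultrafilter.of_le l))⟩
  exact FiniteMeasure.tendsto_iff_forall_integral_tendsto.1 hν
    (BoundedContinuousFunction.mkOfCompact x)

variable [TopologicalSpace.MetrizableSpace Ω] {φ : Ω → Ω} {Y : Set Ω}

theorem tendsto_of_invariantMeasures_eq_singleton (hφ : Continuous φ) (hY : IsClosed Y)
    {μ : ι → ProbabilityMeasure Ω} {ν : ProbabilityMeasure Ω}
    (hν : invariantMeasures φ Y = {ν}) (hμ : ∀ i, (μ i : Measure Ω) Yᶜ = 0)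
    (hinv : ∀ x : C(Ω, ℝ), Tendsto
      (fun i => ∫ ω, x (φ ω) ∂(μ i : Measure Ω) - ∫ ω, x ω ∂(μ i : Measure Ω)) l (𝓝 0)) :
    Tendsto μ l (𝓝 ν) := by
  refine (tendsto_iff_ultrafilter _ _ _).2 fun U hU => ?_
  obtain ⟨ν', hν'⟩ := exists_tendsto_probabilityMeasure U μ
  have hmem := mem_invariantMeasures_of_tendsto hφ hY hν' (.of_forall hμ)
    fun x => (hinv x).mono_left hU
  rw [hν, Set.mem_singleton_iff] at hmem
  rwa [← hmem]

end WeakLimits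

section ErgodicSequences

variable {Ω : Type*} [TopologicalSpace Ω] [MeasurableSpace Ω] [BorelSpace Ω] {φ : Ω → Ω}
  {p : ℕ → Measure ℕ} {T : ℕ → SignedMeasure Ω → SignedMeasure Ω}

theorem tendsto_integral_comp_sub_integral_randomIterate_dirac (hφ : Continuous φ)
    [∀ k, SFinite (p k)] (hT : ∀ k, IsRandomIterateOperator φ (p k) (T k))
    (herg : ∀ (x : C(Ω, ℝ)) (μ : SignedMeasure Ω),
      Tendsto (fun k => spair x (T k μ) - spair x (T k (Vop φ μ))) atTop (𝓝 0))
    (x : C(Ω, ℝ)) (ω : Ω) :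
    Tendsto (fun k => ∫ ω', x (φ ω') ∂randomIterate φ (p k) (Measure.dirac ω) -
      ∫ ω', x ω' ∂randomIterate φ (p k) (Measure.dirac ω)) atTop (𝓝 0) := by
  have hVop : Vop φ (Measure.dirac ω).toSignedMeasure = (Measure.dirac (φ ω)).toSignedMeasure := by
    simpa [Measure.map_dirac' hφ.measurable] using
      Vop_iterate_toSignedMeasure_sub hφ.measurable 1 (Measure.dirac ω) 0
  have hshift (k : ℕ) : ∫ ω', x (φ ω') ∂randomIterate φ (p k) (Measure.dirac ω) =
      spair x (T k (Vop φ (Measure.dirac ω).toSignedMeasure)) := by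
    rw [hVop, (hT k).spair_toSignedMeasure, randomIterate_dirac_map hφ.measurable,
      integral_map hφ.aemeasurable x.continuous.measurable.aestronglyMeasurable]
  simpa only [hshift, (hT _).spair_toSignedMeasure, neg_sub, neg_zero] using
    (herg x (Measure.dirac ω).toSignedMeasure).neg

variable [CompactSpace Ω]

theorem exists_forall_tendsto_integral_randomIterate [T2Space Ω] [∀ k, IsProbabilityMeasure (p k)]
    (hφ : Measurable φ) (hlim : ∀ (x : C(Ω, ℝ)) (ω : Ω), ∃ c, Tendsto
      (fun k => ∫ ω', x ω' ∂randomIterate φ (p k) (Measure.dirac ω)) atTop (𝓝 c))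
    (ν : Measure Ω) [IsFiniteMeasure ν] :
    ∃ ν' : Measure Ω, IsFiniteMeasure ν' ∧ ∀ x : C(Ω, ℝ),
      Tendsto (fun k => ∫ ω, x ω ∂randomIterate φ (p k) ν) atTop (𝓝 (∫ ω, x ω ∂ν')) := by
  choose L hL using hlim
  have hLν (x : C(Ω, ℝ)) := tendsto_integral_randomIterate hφ (hL x) ν
  obtain ⟨ν', hν', hLν'⟩ := exists_isFiniteMeasure_forall_integral_eq
    (C := (ν Set.univ).toNNReal) (fun k => by
      rw [randomIterate_apply_univ hφ, ENNReal.coe_toNNReal (measure_ne_top ν _)]) hLν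
  exact ⟨ν', hν', fun x => hLν' x ▸ hLν x⟩

theorem exists_forall_tendsto_spair [T2Space Ω] [∀ k, IsProbabilityMeasure (p k)]
    (hφ : Measurable φ) (hT : ∀ k, IsRandomIterateOperator φ (p k) (T k))
    (hlim : ∀ (x : C(Ω, ℝ)) (ω : Ω), ∃ c, Tendsto
      (fun k => ∫ ω', x ω' ∂randomIterate φ (p k) (Measure.dirac ω)) atTop (𝓝 c)) :
    ∃ S : SignedMeasure Ω → SignedMeasure Ω, ∀ (x : C(Ω, ℝ)) (μ : SignedMeasure Ω),
      Tendsto (fun k => spair x (T k μ)) atTop (𝓝 (spair x (S μ))) := by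
  suffices h : ∀ μ : SignedMeasure Ω, ∃ μ' : SignedMeasure Ω, ∀ x : C(Ω, ℝ),
      Tendsto (fun k => spair x (T k μ)) atTop (𝓝 (spair x μ')) by
    choose S hS using h
    exact ⟨S, fun x μ => hS μ x⟩
  intro μ
  obtain ⟨P, _, hP⟩ :=
    exists_forall_tendsto_integral_randomIterate hφ hlim μ.toJordanDecomposition.posPart
  obtain ⟨N, _, hN⟩ :=
    exists_forall_tendsto_integral_randomIterate hφ hlim μ.toJordanDecomposition.negPart
  refine ⟨P.toSignedMeasure - N.toSignedMeasure, fun x => ?_⟩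
  rw [spair_toSignedMeasure_sub, ← toSignedMeasure_posPart_sub_negPart μ]
  simpa only [hT _ x] using (hP x).sub (hN x)

theorem exists_forall_tendsto_spair_of_ergodic [TopologicalSpace.MetrizableSpace Ω]
    (hφ : Continuous φ)
    (hmin : ∀ ω : Ω, ∃! m : Set Ω, IsMinimalSet φ m ∧ m ⊆ orbitClosure φ ω)
    (hfree : ∀ x : C(Ω, ℝ), IndependenceFree fun n ω => x (φ^[n] ω))
    (hT : ∀ k, T k ∈ convexHull ℝ (Set.range fun n : ℕ => (Vop φ)^[n]))
    (herg : ∀ (x : C(Ω, ℝ)) (μ : SignedMeasure Ω),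
      Tendsto (fun k => spair x (T k μ) - spair x (T k (Vop φ μ))) atTop (𝓝 0)) :
    ∃ S : SignedMeasure Ω → SignedMeasure Ω, ∀ (x : C(Ω, ℝ)) (μ : SignedMeasure Ω),
      Tendsto (fun k => spair x (T k μ)) atTop (𝓝 (spair x (S μ))) := by
  choose p hp hpT using fun k =>
    exists_isRandomIterateOperator_of_mem_convexHull hφ.measurable (hT k)
  refine exists_forall_tendsto_spair hφ.measurable hpT fun x ω => ?_
  obtain ⟨-, -, -, ν, -, hν⟩ :=
    exists_isMinimalSet_invariantMeasures_orbitClosure hφ hmin hfree ω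
  let κ (k : ℕ) : ProbabilityMeasure Ω := ⟨randomIterate φ (p k) (Measure.dirac ω),
    ⟨by rw [randomIterate_apply_univ hφ.measurable, measure_univ]⟩⟩
  have hκ : Tendsto κ atTop (𝓝 ν) :=
    tendsto_of_invariantMeasures_eq_singleton hφ (isClosed_orbitClosure φ ω) hν
      (fun k => randomIterate_dirac_compl_orbitClosure hφ.measurable (p k) ω)
      fun y => tendsto_integral_comp_sub_integral_randomIterate_dirac hφ hpT herg y ω
  exact ⟨_, tendsto_integral_of_tendsto_probabilityMeasure hκ x⟩

end ErgodicSequences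

variable {Ω : Type*} [TopologicalSpace Ω] [CompactSpace Ω] [TopologicalSpace.MetrizableSpace Ω]
  [Nonempty Ω] [MeasurableSpace Ω] [BorelSpace Ω]

/-- Theorem 3.6: for a tame semicascade in which every orbit closure contains exactly one
minimal set, all ergodic operator sequences converge in the weak* operator topology and the
support of every `φ`-ergodic measure is a minimal set. -/
theorem stmt_16 (φ : Ω → Ω) (hφ : Continuous φ) (htame : Tame φ hφ)
    (hmin : ∀ ω : Ω, ∃! m : Set Ω, IsMinimalSet φ m ∧ m ⊆ orbitClosure φ ω) :
    (∀ T : ℕ → SignedMeasure Ω → SignedMeasure Ω,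
      (∀ k, T k ∈ convexHull ℝ (Set.range fun n : ℕ => (Vop φ)^[n])) →
      (∀ (x : C(Ω, ℝ)) (μ : SignedMeasure Ω),
        Tendsto (fun k => spair (⇑x) (T k μ) - spair (⇑x) (T k (Vop φ μ))) atTop (𝓝 0)) →
      ∃ S : SignedMeasure Ω → SignedMeasure Ω, ∀ (x : C(Ω, ℝ)) (μ : SignedMeasure Ω),
        Tendsto (fun k => spair (⇑x) (T k μ)) atTop (𝓝 (spair (⇑x) (S μ)))) ∧
    (∀ μ : Measure Ω, IsErgodicMeasure φ μ → IsMinimalSet φ (msupp μ)) := by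
  have hfree := htame.independenceFree
  exact ⟨fun _ hT herg => exists_forall_tendsto_spair_of_ergodic hφ hmin hfree hT herg,
    fun _ hμ => hμ.isMinimalSet_msupp hφ hmin hfree⟩
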